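/- arXiv:math/0406574 — 2 statements merged into one kernel-verified Lean document; each statement's English description precedes it below -/
import Mathlib

section
/- (Pieri rule for B_n, stated at the level of Weyl alternants.) Let n ≥ 1, let γ be a dominant weight of type B_n, and let r ∈ ℕ. In the Laurent polynomial ring ℤ[y_1^{±1},…,y_n^{±1}], where for β ∈ (ℤ/2)^n we write x^β = Π_{i=1}^n y_i^{2β_i} and a^{B_n}_β = Σ_{σ∈W_{B_n}} det(σ)·x^{σ(β)}, the following identity holds: a^{B_n}_{γ+ρ_{B_n}} · ( Σ x^{(k̄_n − k_n, …, k̄_1 − k_1)} ) = Σ_λ b^λ_{γ,r} · a^{B_n}_{λ+ρ_{B_n}}, where the sum on the left is over all tuples (k_1,…,k_n,k̄_1,…,k̄_n) ∈ ℕ^{2n} and k_0 ∈ {0,1} with k_0 + Σ_{i=1}^n (k_i + k̄_i) = r, and the sum on the right is over all dominant weights λ of type B_n with λ − γ ∈ ℤ^n (only finitely many terms are nonzero). (The left factor is the character of the irreducible so_{2n+1}-module V(rΛ_{n−1}), so b^λ_{γ,r} is the multiplicity of V(λ) in V(γ) ⊗ V(rΛ_{n−1}).) -/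
open scoped BigOperators

noncomputable section

/-- The `q`-analogue of Kostant's partition function attached to the finite set `R`
of positive roots: the coefficient of `q^k` is the number of families
`(m_α)_{α ∈ R}` of nonnegative integers with `∑ m_α = k` and `∑ m_α • α = β`. -/
def kostantQ {n : ℕ} (R : Finset (Fin n → ℚ)) (β : Fin n → ℚ) : PowerSeries ℤ :=
  PowerSeries.mk fun k =>
    (Nat.card {m : {α // α ∈ R} → ℕ //
      (∑ α, m α) = k ∧ (∑ α, (m α : ℚ) • (α : Fin n → ℚ)) = β} : ℤ)

/-- Positive roots of type `D_n` : `e_i - e_j` and `e_i + e_j` for `j < i`. -/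
def rootsD (n : ℕ) : Finset (Fin n → ℚ) :=
  ((Finset.univ : Finset (Fin n × Fin n)).filter fun p => p.2 < p.1).image
      (fun p => Pi.single p.1 (1 : ℚ) - Pi.single p.2 1) ∪
  ((Finset.univ : Finset (Fin n × Fin n)).filter fun p => p.2 < p.1).image
      (fun p => Pi.single p.1 (1 : ℚ) + Pi.single p.2 1)

/-- Positive roots of type `B_n`. -/
def rootsB (n : ℕ) : Finset (Fin n → ℚ) :=
  rootsD n ∪ (Finset.univ : Finset (Fin n)).image fun i => Pi.single i (1 : ℚ)

/-- Positive roots of type `C_n`. -/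
def rootsC (n : ℕ) : Finset (Fin n → ℚ) :=
  rootsD n ∪ (Finset.univ : Finset (Fin n)).image fun i => Pi.single i (2 : ℚ)

/-- Positive roots of type `A_{n-1}` : `e_i - e_j` for `j < i`. -/
def rootsA (n : ℕ) : Finset (Fin n → ℚ) :=
  ((Finset.univ : Finset (Fin n × Fin n)).filter fun p => p.2 < p.1).image
      fun p => Pi.single p.1 (1 : ℚ) - Pi.single p.2 1

/-- `ρ` of type `B_n` : `e_i`-coordinate `i - 1/2` (`0`-based index `i ↦ i + 1/2`). -/
def rhoB (n : ℕ) : Fin n → ℚ := fun i => ((i : ℕ) : ℚ) + 1/2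

/-- `ρ` of type `C_n` : `e_i`-coordinate `i`. -/
def rhoC (n : ℕ) : Fin n → ℚ := fun i => ((i : ℕ) : ℚ) + 1

/-- `ρ` of type `D_n` : `e_i`-coordinate `i - 1`. -/
def rhoD (n : ℕ) : Fin n → ℚ := fun i => ((i : ℕ) : ℚ)

/-- `ρ` of type `A_{n-1}` : `e_i`-coordinate `i - 1`. -/
def rhoA (n : ℕ) : Fin n → ℚ := fun i => ((i : ℕ) : ℚ)

/-- The signed permutation `(σ, ε)` acting on a weight: it maps `e_j` to `± e_{σ j}`. -/
def wAct {n : ℕ} (σ : Equiv.Perm (Fin n)) (ε : Fin n → Bool) (β : Fin n → ℚ) :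
    Fin n → ℚ := fun i => (if ε i then -1 else 1) * β (σ⁻¹ i)

/-- The determinant (sign) of the signed permutation `(σ, ε)`. -/
def wDet {n : ℕ} (σ : Equiv.Perm (Fin n)) (ε : Fin n → Bool) : ℤ :=
  (Equiv.Perm.sign σ : ℤ) * ∏ i, (if ε i then (-1 : ℤ) else 1)

/-- Kostka-Foulkes polynomial of type `B_n`, as a power series in `q`. -/
def KB (n : ℕ) (lam mu : Fin n → ℚ) : PowerSeries ℤ :=
  ∑ σ : Equiv.Perm (Fin n), ∑ ε : Fin n → Bool,
    wDet σ ε • kostantQ (rootsB n) (wAct σ ε (lam + rhoB n) - (mu + rhoB n))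

/-- Kostka-Foulkes polynomial of type `C_n`, as a power series in `q`. -/
def KC (n : ℕ) (lam mu : Fin n → ℚ) : PowerSeries ℤ :=
  ∑ σ : Equiv.Perm (Fin n), ∑ ε : Fin n → Bool,
    wDet σ ε • kostantQ (rootsC n) (wAct σ ε (lam + rhoC n) - (mu + rhoC n))

/-- Kostka-Foulkes polynomial of type `D_n`, as a power series in `q` (the Weyl group
consists of the signed permutations with an even number of sign changes). -/
def KD (n : ℕ) (lam mu : Fin n → ℚ) : PowerSeries ℤ :=
  ∑ σ : Equiv.Perm (Fin n), ∑ ε : Fin n → Bool,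
    if (∏ i, (if ε i then (-1 : ℤ) else 1)) = 1 then
      wDet σ ε • kostantQ (rootsD n) (wAct σ ε (lam + rhoD n) - (mu + rhoD n))
    else 0

/-- Kostka-Foulkes polynomial of type `A_{n-1}`, as a power series in `q`. -/
def KA (n : ℕ) (lam mu : Fin n → ℚ) : PowerSeries ℤ :=
  ∑ σ : Equiv.Perm (Fin n),
    (Equiv.Perm.sign σ : ℤ) •
      kostantQ (rootsA n) ((fun i => (lam + rhoA n) (σ⁻¹ i)) - (mu + rhoA n))

/-- Dominant weight of type `B_n` : `λ_n ≥ ⋯ ≥ λ_1 ≥ 0`, all coordinates in `ℤ`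
or all in `ℤ + 1/2`. -/
def DominantB {n : ℕ} (lam : Fin n → ℚ) : Prop :=
  Monotone lam ∧ (∀ i, 0 ≤ lam i) ∧
    ((∀ i, ∃ z : ℤ, lam i = z) ∨ (∀ i, ∃ z : ℤ, lam i = z + 1/2))

/-- Dominant weight of type `C_n` : `λ_n ≥ ⋯ ≥ λ_1 ≥ 0`, integer coordinates. -/
def DominantC {n : ℕ} (lam : Fin n → ℚ) : Prop :=
  Monotone lam ∧ (∀ i, 0 ≤ lam i) ∧ ∀ i, ∃ z : ℤ, lam i = z

/-- Dominant weight of type `D_n` : `λ_n ≥ ⋯ ≥ λ_2 ≥ |λ_1|`, all coordinates in `ℤ`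
or all in `ℤ + 1/2`. -/
def DominantD {n : ℕ} (lam : Fin n → ℚ) : Prop :=
  (∀ i j : Fin n, i ≤ j → 0 < (i : ℕ) → lam i ≤ lam j) ∧
  (∀ h : 0 < n, ∀ j : Fin n, 0 < (j : ℕ) → |lam ⟨0, h⟩| ≤ lam j) ∧
  ((∀ i, ∃ z : ℤ, lam i = z) ∨ (∀ i, ∃ z : ℤ, lam i = z + 1/2))

/-- Restriction of a weight of rank `n` to the first `n - 1` coordinates
(i.e. forgetting the `e_n`-coordinate). -/
def restrict1 {n : ℕ} (lam : Fin n → ℚ) : Fin (n - 1) → ℚ :=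
  fun i => lam ⟨(i : ℕ), by have := i.2; omega⟩

/-- Pieri number `b^λ_{γ,r}` of type `B_n`. -/
def bPieri {m : ℕ} (γ lam : Fin m → ℚ) (r : ℕ) : ℕ :=
  Nat.card {t : (Fin m → ℕ) × (Fin m → ℕ) × Bool //
    ((cond t.2.2 1 0) + ∑ i, (t.1 i + t.2.1 i)) = r ∧
    (∀ i, ((t.2.1 i : ℚ) - (t.1 i : ℚ)) = lam i - γ i) ∧
    (∀ i : Fin m, ∀ h : (i : ℕ) + 1 < m,
      lam i ≤ lam ⟨(i : ℕ) + 1, h⟩ - (t.2.1 ⟨(i : ℕ) + 1, h⟩ : ℚ)) ∧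
    (∀ i : Fin m, ∀ h : (i : ℕ) + 1 < m,
      lam i + (t.1 i : ℚ) - (t.2.1 i : ℚ) ≤
        lam ⟨(i : ℕ) + 1, h⟩ - (t.2.1 ⟨(i : ℕ) + 1, h⟩ : ℚ)) ∧
    (∀ h : 0 < m,
      if t.2.2 then (0 : ℚ) < lam ⟨0, h⟩ - (t.2.1 ⟨0, h⟩ : ℚ)
      else (0 : ℚ) ≤ lam ⟨0, h⟩ - (t.2.1 ⟨0, h⟩ : ℚ))}

/-- Pieri number `c^λ_{γ,r}` of type `C_n`. -/
def cPieri {m : ℕ} (γ lam : Fin m → ℚ) (r : ℕ) : ℕ :=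
  Nat.card {t : (Fin m → ℕ) × (Fin m → ℕ) //
    (∑ i, (t.1 i + t.2 i)) = r ∧
    (∀ i, ((t.2 i : ℚ) - (t.1 i : ℚ)) = lam i - γ i) ∧
    (∀ i : Fin m, ∀ h : (i : ℕ) + 1 < m,
      lam i ≤ lam ⟨(i : ℕ) + 1, h⟩ - (t.2 ⟨(i : ℕ) + 1, h⟩ : ℚ)) ∧
    (∀ i : Fin m, ∀ h : (i : ℕ) + 1 < m,
      lam i + (t.1 i : ℚ) - (t.2 i : ℚ) ≤
        lam ⟨(i : ℕ) + 1, h⟩ - (t.2 ⟨(i : ℕ) + 1, h⟩ : ℚ)) ∧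
    (∀ h : 0 < m, (0 : ℚ) ≤ lam ⟨0, h⟩ - (t.2 ⟨0, h⟩ : ℚ))}

/-- Pieri number `d^λ_{γ,r}` of type `D_n`. -/
def dPieri {m : ℕ} (γ lam : Fin m → ℚ) (r : ℕ) : ℕ :=
  Nat.card {t : (Fin m → ℕ) × (Fin m → ℕ) //
    (∀ h : 0 < m, min (t.1 ⟨0, h⟩) (t.2 ⟨0, h⟩) = 0) ∧
    (∑ i, (t.1 i + t.2 i)) = r ∧
    (∀ i, ((t.2 i : ℚ) - (t.1 i : ℚ)) = lam i - γ i) ∧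
    (∀ h : 1 < m,
      (t.1 ⟨0, by omega⟩ = 0 →
        lam ⟨0, by omega⟩ ≤ lam ⟨1, h⟩ - (t.2 ⟨1, h⟩ : ℚ)) ∧
      (0 < t.1 ⟨0, by omega⟩ →
        -lam ⟨0, by omega⟩ ≤ lam ⟨1, h⟩ - (t.2 ⟨1, h⟩ : ℚ))) ∧
    (∀ i : Fin m, 1 ≤ (i : ℕ) → ∀ h : (i : ℕ) + 1 < m,
      lam i ≤ lam ⟨(i : ℕ) + 1, h⟩ - (t.2 ⟨(i : ℕ) + 1, h⟩ : ℚ)) ∧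
    (∀ i : Fin m, 1 ≤ (i : ℕ) → ∀ h : (i : ℕ) + 1 < m,
      lam i + (t.1 i : ℚ) - (t.2 i : ℚ) ≤
        lam ⟨(i : ℕ) + 1, h⟩ - (t.2 ⟨(i : ℕ) + 1, h⟩ : ℚ)) ∧
    (∀ h : 1 < m,
      (t.1 ⟨0, by omega⟩ = 0 → 0 ≤ γ ⟨0, by omega⟩ →
        lam ⟨0, by omega⟩ - (t.2 ⟨0, by omega⟩ : ℚ) ≤ lam ⟨1, h⟩ - (t.2 ⟨1, h⟩ : ℚ)) ∧
      (t.2 ⟨0, by omega⟩ = 0 → 0 ≤ γ ⟨0, by omega⟩ →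
        lam ⟨0, by omega⟩ + (t.1 ⟨0, by omega⟩ : ℚ) ≤ lam ⟨1, h⟩ - (t.2 ⟨1, h⟩ : ℚ)) ∧
      (t.2 ⟨0, by omega⟩ = 0 → γ ⟨0, by omega⟩ < 0 →
        -lam ⟨0, by omega⟩ - (t.1 ⟨0, by omega⟩ : ℚ) ≤ lam ⟨1, h⟩ - (t.2 ⟨1, h⟩ : ℚ)) ∧
      (t.1 ⟨0, by omega⟩ = 0 → γ ⟨0, by omega⟩ < 0 →
        -lam ⟨0, by omega⟩ + (t.2 ⟨0, by omega⟩ : ℚ) ≤ lam ⟨1, h⟩ - (t.2 ⟨1, h⟩ : ℚ)))}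

/-- The monomial `x^β = ∏ y_i ^ (2 β_i)` in the Laurent polynomial ring
`ℤ[y_1^{±1}, …, y_n^{±1}]`, realized as the group algebra of `ℤ^n`. -/
def xpow {n : ℕ} (β : Fin n → ℚ) : AddMonoidAlgebra ℤ (Fin n → ℤ) :=
  AddMonoidAlgebra.single (fun i => ⌊2 * β i⌋) 1

/-- The Weyl alternant `a_β = ∑_{σ ∈ W_{B_n}} det σ · x^{σ β}` of type `B_n`. -/
def altB {n : ℕ} (β : Fin n → ℚ) : AddMonoidAlgebra ℤ (Fin n → ℤ) :=
  ∑ σ : Equiv.Perm (Fin n), ∑ ε : Fin n → Bool, wDet σ ε • xpow (wAct σ ε β)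

/-- The Weyl alternant `a_β = ∑_{σ ∈ W_{D_n}} det σ · x^{σ β}` of type `D_n`. -/
def altD {n : ℕ} (β : Fin n → ℚ) : AddMonoidAlgebra ℤ (Fin n → ℤ) :=
  ∑ σ : Equiv.Perm (Fin n), ∑ ε : Fin n → Bool,
    if (∏ i, (if ε i then (-1 : ℤ) else 1)) = 1 then wDet σ ε • xpow (wAct σ ε β) else 0

end

/-!
The character sums on the left-hand side have the generating function
`(1 + X) ∏ⱼ 1 / ((1 - X y_j ^ 2) (1 - X y_j ^ (-2)))`, so the theorem is the coefficient of `X ^ r`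
in the product of this series with the alternant of `γ + ρ = b + δ/2`, where `δ ≤ 1`. This is a
determinant whose rows are the `s(bᵢ)`, where `s(m)` has the entries
`y_j ^ (2m + δ) - y_j ^ (-2m - δ)`. Let `a(m)` be the row `s(m)` with its `j`-th entry multiplied by
`1 / ((1 - X y_j ^ 2) (1 - X y_j ^ (-2)))`, and let `u(m) = ∑ₖ X ^ k s(m + k)`. Then
`a(m + 1) = X a(m) + u(m + 1)` and `u(m) = s(m) + X u(m + 1)`.
By the first recursion, subtracting from each row `a(bᵢ)` the right multiple of the preceding one
leaves `∑ X ^ (bᵢ - m) u(m)` over `bᵢ₋₁ < m ≤ bᵢ`, so that the determinant expands into rows `u(mᵢ)`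
with `m` interlacing `b`. By the second, subtracting from each row `u(mᵢ)` the right multiple of the
following one expands it further into rows `s(lᵢ)` with `l` interlacing `m`. The Pieri tuples are
read off as `k = b - m` and `k̄ = l - m`, while the factor `1 + X`, absorbed by the row of `m₀`,
gives `k₀`.
-/

namespace PieriB

section Telescoping

variable {R M : Type*} [CommSemiring R] [AddCommMonoid M] [Module R M] {t : R} {a s u : ℕ → M}

theorem eq_sum_Ioc_add_pow_smul (ha : ∀ m, a (m + 1) = t • a m + u (m + 1)) {b c : ℕ}
    (hbc : b ≤ c) : a c = ∑ m ∈ Finset.Ioc b c, t ^ (c - m) • u m + t ^ (c - b) • a b := by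
  induction c, hbc using Nat.le_induction with
  | base => simp
  | succ c hbc ih =>
    have hpow : ∀ m ≤ c, t ^ (c + 1 - m) = t * t ^ (c - m) := fun m hm => by
      rw [Nat.sub_add_comm hm, pow_succ']
    have hsum : ∑ m ∈ Finset.Ioc b c, t ^ (c + 1 - m) • u m =
        t • ∑ m ∈ Finset.Ioc b c, t ^ (c - m) • u m := by
      rw [Finset.smul_sum]
      refine Finset.sum_congr rfl fun m hm => ?_
      rw [hpow m (Finset.mem_Ioc.1 hm).2, mul_smul]
    rw [ha, ih, Finset.sum_Ioc_succ_top hbc, hsum, hpow b hbc, Nat.sub_self, pow_zero, one_smul,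
      mul_smul, smul_add, add_right_comm]

theorem one_add_smul_eq_sum_Icc {c : R} (ha : ∀ m, a (m + 1) = t • a m + u (m + 1))
    (h0 : (1 + t) • a 0 = c • u 0) (b : ℕ) :
    (1 + t) • a b =
      ∑ m ∈ Finset.Icc 0 b, ((if m = 0 then c else 1 + t) * t ^ (b - m)) • u m := by
  rw [eq_sum_Ioc_add_pow_smul ha b.zero_le, ← Finset.sum_Ioc_add_eq_sum_Icc b.zero_le, smul_add,
    Finset.smul_sum, smul_comm, h0, if_pos rfl, mul_comm c, mul_smul]
  refine congrArg (· + _) (Finset.sum_congr rfl fun m hm => ?_)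
  rw [if_neg (Finset.mem_Ioc.1 hm).1.ne', mul_smul]

theorem eq_sum_Ico_add_pow_smul (hu : ∀ m, u m = s m + t • u (m + 1)) {m c : ℕ} (hmc : m ≤ c) :
    u m = ∑ l ∈ Finset.Ico m c, t ^ (l - m) • s l + t ^ (c - m) • u c := by
  induction c, hmc using Nat.le_induction with
  | base => simp
  | succ c hmc ih =>
    rw [Finset.sum_Ico_succ_top hmc, Nat.sub_add_comm hmc, pow_succ, mul_smul, add_assoc,
      ← smul_add, ← hu, ← ih]

end Telescoping

section Determinants

variable {R : Type*} [CommRing R]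

theorem det_of_sum_smul {ι κ : Type*} [Fintype ι] [DecidableEq ι] (S : ι → Finset κ)
    (c : ι → κ → R) (v : κ → ι → R) :
    Matrix.det (Matrix.of fun i => ∑ k ∈ S i, c i k • v k) =
      ∑ f ∈ Fintype.piFinset S, (∏ i, c i (f i)) * Matrix.det (Matrix.of fun i => v (f i)) := by
  let D := (Matrix.detRowAlternating (n := ι) (R := R)).toMultilinearMap
  calc D (fun i => ∑ k ∈ S i, c i k • v k)
      = ∑ f ∈ Fintype.piFinset S, D fun i => c i (f i) • v (f i) :=
        D.map_sum_finset (fun i k => c i k • v k) S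
    _ = ∑ f ∈ Fintype.piFinset S, (∏ i, c i (f i)) * D fun i => v (f i) :=
        Finset.sum_congr rfl fun f _ => D.map_smul_univ _ _

theorem det_eq_of_forall_row_eq_add_smul_succ {N : ℕ}
    {A B : Matrix (Fin (N + 1)) (Fin (N + 1)) R} (c : Fin N → R)
    (hlast : A (Fin.last N) = B (Fin.last N))
    (hsucc : ∀ i : Fin N, A i.castSucc = B i.castSucc + c i • A i.succ) : A.det = B.det := by
  rw [← Matrix.det_submatrix_equiv_self Fin.revPerm A,
    ← Matrix.det_submatrix_equiv_self Fin.revPerm B]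
  refine Matrix.det_eq_of_forall_row_eq_smul_add_pred (fun i => c i.rev) (fun j => ?_)
    fun i j => ?_
  · simpa using congrFun hlast j.rev
  · simpa [Fin.rev_succ, Fin.rev_castSucc] using congrFun (hsucc i.rev) j.rev

end Determinants

section Interlacing

variable {N : ℕ}

/-- The interlacing `m₀ ≤ b₀ < m₁ ≤ b₁ < ⋯` of shifted weights. Subtracting `ρ` turns it into
`μ₀ ≤ β₀ ≤ μ₁ ≤ β₁ ≤ ⋯`. -/
def Interlaces (m b : Fin (N + 1) → ℕ) : Prop :=
  (∀ i, m i ≤ b i) ∧ ∀ i : Fin N, b i.castSucc < m i.succ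

theorem Interlaces.strictMono {m b : Fin (N + 1) → ℕ} (h : Interlaces m b) : StrictMono m :=
  Fin.strictMono_iff_lt_succ.2 fun i => (h.1 _).trans_lt (h.2 i)

/-- The finite set of all `m` with `Interlaces m b`, as a box: this is the form in which it
indexes the expansion of a determinant along all of its rows. -/
def interlacingBelow (b : Fin (N + 1) → ℕ) : Finset (Fin (N + 1) → ℕ) :=
  Fintype.piFinset fun i =>
    Finset.Icc ((Fin.cons 0 fun i => b i.castSucc + 1 : Fin (N + 1) → ℕ) i) (b i)

/-- The finite set of all `l` with `Interlaces m l`, as a box; the last coordinate, which the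
interlacing leaves unbounded, is cut off at distance `d` from that of `m`. -/
def interlacingAbove (m : Fin (N + 1) → ℕ) (d : ℕ) : Finset (Fin (N + 1) → ℕ) :=
  Fintype.piFinset fun i =>
    Finset.Ico (m i) ((Fin.snoc (fun i => m i.succ) (m (Fin.last N) + d) : Fin (N + 1) → ℕ) i)

theorem mem_interlacingBelow {m b : Fin (N + 1) → ℕ} :
    m ∈ interlacingBelow b ↔ Interlaces m b := by
  simp [interlacingBelow, Interlaces, forall_and, Fin.forall_fin_succ, and_comm]

theorem mem_interlacingAbove {m l : Fin (N + 1) → ℕ} {d : ℕ} :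
    l ∈ interlacingAbove m d ↔ Interlaces m l ∧ l (Fin.last N) < m (Fin.last N) + d := by
  simp [interlacingAbove, Interlaces, forall_and, Fin.forall_fin_succ', and_assoc]

variable {R : Type*} [CommRing R] {t : R} {a s u : ℕ → Fin (N + 1) → R}

theorem det_eq_det_cons_sum_Ioc (ha : ∀ m, a (m + 1) = t • a m + u (m + 1))
    {b : Fin (N + 1) → ℕ} (hb : StrictMono b) :
    Matrix.det (Matrix.of fun i => a (b i)) =
      Matrix.det (Matrix.of (Fin.cons (a (b 0)) fun i : Fin N =>
        ∑ m ∈ Finset.Ioc (b i.castSucc) (b i.succ), t ^ (b i.succ - m) • u m)) := by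
  refine Matrix.det_eq_of_forall_row_eq_smul_add_pred
    (fun i => t ^ (b i.succ - b i.castSucc)) (fun _ => rfl) fun i j => ?_
  exact congrFun (eq_sum_Ioc_add_pow_smul ha (hb i.castSucc_lt_succ).le) j

theorem one_add_mul_det_eq_sum_interlacingBelow {c : R}
    (ha : ∀ m, a (m + 1) = t • a m + u (m + 1)) (h0 : (1 + t) • a 0 = c • u 0)
    {b : Fin (N + 1) → ℕ} (hb : StrictMono b) :
    (1 + t) * Matrix.det (Matrix.of fun i => a (b i)) =
      ∑ m ∈ interlacingBelow b, (if m 0 = 0 then c else 1 + t) * t ^ (∑ i, (b i - m i)) *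
        Matrix.det (Matrix.of fun i => u (m i)) := by
  let P : Fin N → Fin (N + 1) → R := fun i =>
    ∑ m ∈ Finset.Ioc (b i.castSucc) (b i.succ), t ^ (b i.succ - m) • u m
  let lo : Fin (N + 1) → ℕ := Fin.cons 0 fun i => b i.castSucc + 1
  let w : Fin (N + 1) → ℕ → R := fun i m => if i = 0 then if m = 0 then c else 1 + t else 1
  have hrows : (Fin.cons ((1 + t) • a (b 0)) P : Fin (N + 1) → Fin (N + 1) → R) =
      fun i => ∑ m ∈ Finset.Icc (lo i) (b i), (w i m * t ^ (b i - m)) • u m := by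
    funext i
    cases i using Fin.cases with
    | zero => exact one_add_smul_eq_sum_Icc ha h0 (b 0)
    | succ i => simp [P, w, lo, Finset.Icc_add_one_left_eq_Ioc]
  calc (1 + t) * Matrix.det (Matrix.of fun i => a (b i))
      = (1 + t) * Matrix.det (Matrix.of (Fin.cons (a (b 0)) P)) := by
        rw [det_eq_det_cons_sum_Ioc ha hb]
    _ = Matrix.det (Matrix.of (Fin.cons ((1 + t) • a (b 0)) P)) := by
        have h := Matrix.det_updateRow_smul (Matrix.of (Fin.cons (a (b 0)) P)) 0 (1 + t) (a (b 0))
        have hupd : ∀ v, (Matrix.of (Fin.cons (a (b 0)) P)).updateRow 0 v =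
            Matrix.of (Fin.cons v P) := fun v =>
          Fin.update_cons_zero (α := fun _ => Fin (N + 1) → R) (a (b 0)) P v
        rw [hupd, hupd] at h
        exact h.symm
    _ = ∑ m ∈ interlacingBelow b, (∏ i, w i (m i) * t ^ (b i - m i)) *
          Matrix.det (Matrix.of fun i => u (m i)) := by
        rw [hrows, det_of_sum_smul]
        rfl
    _ = _ := by
        refine Finset.sum_congr rfl fun m _ => ?_
        rw [Finset.prod_mul_distrib, Finset.prod_pow_eq_pow_sum, Fintype.prod_ite_eq']

theorem pow_dvd_det_sub_sum_interlacingAbove (hu : ∀ m, u m = s m + t • u (m + 1))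
    {m : Fin (N + 1) → ℕ} (hm : StrictMono m) (d : ℕ) :
    t ^ d ∣ Matrix.det (Matrix.of fun i => u (m i)) -
      ∑ l ∈ interlacingAbove m d, t ^ (∑ i, (l i - m i)) *
        Matrix.det (Matrix.of fun i => s (l i)) := by
  let hi : Fin (N + 1) → ℕ := Fin.snoc (fun i => m i.succ) (m (Fin.last N) + d)
  have hlast : hi (Fin.last N) = m (Fin.last N) + d := Fin.snoc_last _ _
  have hcast : ∀ i : Fin N, hi i.castSucc = m i.succ := Fin.snoc_castSucc _ _
  let B : Matrix (Fin (N + 1)) (Fin (N + 1)) R :=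
    Matrix.of fun i => ∑ l ∈ Finset.Ico (m i) (hi i), t ^ (l - m i) • s l
  have hB : ∀ i, u (m i) = B i + t ^ (hi i - m i) • u (hi i) := fun i =>
    eq_sum_Ico_add_pow_smul hu <| by
      cases i using Fin.lastCases with
      | last => exact hlast ▸ Nat.le_add_right _ _
      | cast i => exact hcast i ▸ (hm i.castSucc_lt_succ).le
  have hdet : Matrix.det (Matrix.of fun i => u (m i)) =
      (B.updateRow (Fin.last N)
        (B (Fin.last N) + t ^ d • u (m (Fin.last N) + d))).det := by
    refine det_eq_of_forall_row_eq_add_smul_succ (fun i => t ^ (m i.succ - m i.castSucc)) ?_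
      fun i => ?_
    · have h := hB (Fin.last N)
      rw [hlast, Nat.add_sub_cancel_left] at h
      rw [Matrix.updateRow_self]
      exact h
    · have h := hB i.castSucc
      rw [hcast] at h
      rw [Matrix.updateRow_ne (Fin.castSucc_lt_last i).ne]
      exact h
  have hsum : B.det = ∑ l ∈ interlacingAbove m d, t ^ (∑ i, (l i - m i)) *
      Matrix.det (Matrix.of fun i => s (l i)) := by
    simp only [B, det_of_sum_smul, Finset.prod_pow_eq_pow_sum]
    rfl
  rw [hdet, Matrix.det_updateRow_add, Matrix.updateRow_eq_self, Matrix.det_updateRow_smul, hsum,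
    add_sub_cancel_left]
  exact dvd_mul_right _ _

end Interlacing

section Alternants

variable {n : ℕ} {R : Type*} [CommRing R]

/-- A row of the type `B` alternant: the entries `x_j^(2m+δ) - x_j^(-2m-δ)`, where `y j` stands for
the inverse of `x j`. Only `δ ≤ 1` is of interest: `m + δ/2` is then a coordinate of a weight
shifted by the half-integral `ρ`, so that integral weights have `δ = 1` and half-integral ones
`δ = 0`. -/
def altRow (x y : Fin n → R) (δ m : ℕ) : Fin n → R := fun j =>
  x j ^ (2 * m + δ) - y j ^ (2 * m + δ)

/-- The row `x_j^(2m+δ) g_j - x_j^(-2m-δ) h_j`. For `g = 1/(1 - t x²)` and `h = 1/(1 - t x⁻²)` it is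
the generating function `∑ₖ tᵏ altRow (m + k)`. -/
def mixedRow (x y g h : Fin n → R) (δ m : ℕ) : Fin n → R := fun j =>
  x j ^ (2 * m + δ) * g j - y j ^ (2 * m + δ) * h j

/-- The type `B` alternant of a weight whose shift by `ρ` is `b + δ/2`. -/
def alternant (x y : Fin n → R) (δ : ℕ) (b : Fin n → ℕ) : R :=
  Matrix.det (Matrix.of fun i => altRow x y δ (b i))

theorem prod_mul_alternant (w x y : Fin n → R) (δ : ℕ) (b : Fin n → ℕ) :
    (∏ j, w j) * alternant x y δ b = Matrix.det (Matrix.of fun i => w * altRow x y δ (b i)) :=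
  (Matrix.det_mul_row w _).symm

variable {x y g h : Fin n → R} {t : R}

theorem mixedRow_eq_altRow_add (hg : ∀ j, g j * (1 - t * x j ^ 2) = 1)
    (hh : ∀ j, h j * (1 - t * y j ^ 2) = 1) (δ m : ℕ) :
    mixedRow x y g h δ m = altRow x y δ m + t • mixedRow x y g h δ (m + 1) := by
  funext j
  simp only [mixedRow, altRow, Pi.add_apply, Pi.smul_apply, smul_eq_mul]
  linear_combination x j ^ (2 * m + δ) * hg j - y j ^ (2 * m + δ) * hh j

theorem mul_altRow_succ (hxy : ∀ j, x j * y j = 1) (hg : ∀ j, g j * (1 - t * x j ^ 2) = 1)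
    (hh : ∀ j, h j * (1 - t * y j ^ 2) = 1) (δ m : ℕ) :
    g * h * altRow x y δ (m + 1) =
      t • (g * h * altRow x y δ m) + mixedRow x y g h δ (m + 1) := by
  funext j
  simp only [mixedRow, altRow, Pi.add_apply, Pi.mul_apply, Pi.smul_apply, smul_eq_mul]
  linear_combination x j ^ (2 * m + 2 + δ) * g j * hh j - y j ^ (2 * m + 2 + δ) * h j * hg j +
    (x j ^ (2 * m + δ) - y j ^ (2 * m + δ)) * t * g j * h j * (x j * y j + 1) * hxy j

theorem one_add_smul_mul_altRow_zero (hxy : ∀ j, x j * y j = 1)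
    (hg : ∀ j, g j * (1 - t * x j ^ 2) = 1) (hh : ∀ j, h j * (1 - t * y j ^ 2) = 1) {δ : ℕ}
    (hδ : δ ≤ 1) :
    (1 + t) • (g * h * altRow x y δ 0) = (δ : R) • mixedRow x y g h δ 0 := by
  funext j
  simp only [mixedRow, altRow, Pi.mul_apply, Pi.smul_apply, smul_eq_mul]
  interval_cases δ
  · simp
  · push_cast
    linear_combination x j * g j * hh j - y j * h j * hg j -
      (x j - y j) * t * g j * h j * hxy j

end Alternants

theorem pow_dvd_mul_alternant_sub_sum {N : ℕ} {R : Type*} [CommRing R]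
    {x y g h : Fin (N + 1) → R} {t : R} (hxy : ∀ j, x j * y j = 1)
    (hg : ∀ j, g j * (1 - t * x j ^ 2) = 1) (hh : ∀ j, h j * (1 - t * y j ^ 2) = 1) {δ : ℕ}
    (hδ : δ ≤ 1) {b : Fin (N + 1) → ℕ} (hb : StrictMono b) (d : ℕ) :
    t ^ d ∣ (1 + t) * (∏ j, g j * h j) * alternant x y δ b -
      ∑ m ∈ interlacingBelow b, (if m 0 = 0 then (δ : R) else 1 + t) * t ^ (∑ i, (b i - m i)) *
        ∑ l ∈ interlacingAbove m d, t ^ (∑ i, (l i - m i)) * alternant x y δ l := by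
  have hdown : (1 + t) * (∏ j, g j * h j) * alternant x y δ b =
      ∑ m ∈ interlacingBelow b, (if m 0 = 0 then (δ : R) else 1 + t) * t ^ (∑ i, (b i - m i)) *
        Matrix.det (Matrix.of fun i => mixedRow x y g h δ (m i)) := by
    rw [mul_assoc]
    refine (congrArg _ (prod_mul_alternant (g * h) x y δ b)).trans ?_
    exact one_add_mul_det_eq_sum_interlacingBelow (a := fun m => g * h * altRow x y δ m)
      (mul_altRow_succ hxy hg hh δ) (one_add_smul_mul_altRow_zero hxy hg hh hδ) hb
  rw [hdown, ← Finset.sum_sub_distrib]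
  refine Finset.dvd_sum fun m hm => ?_
  rw [← mul_sub]
  exact (pow_dvd_det_sub_sum_interlacingAbove (mixedRow_eq_altRow_add hg hh δ)
    (mem_interlacingBelow.1 hm).strictMono d).mul_left _

section GeneratingSeries

open PowerSeries

variable {R : Type*} [CommSemiring R]

/-- The geometric series `1/(1 - cX)`. -/
def geomSeries (c : R) : R⟦X⟧ := PowerSeries.mk fun k => c ^ k

theorem geomSeries_mul_one_sub {R : Type*} [CommRing R] (c : R) :
    geomSeries c * (1 - X * C c) = 1 := by
  have h := congrArg (rescale c) (mk_one_mul_one_sub_eq_one R)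
  simp only [map_mul, map_sub, map_one, rescale_mk, rescale_X, Pi.one_apply, mul_one] at h
  rwa [mul_comm X]

theorem coeff_prod_eq_sum_fin {ι : Type*} [Fintype ι] [DecidableEq ι] (f : ι → R⟦X⟧) {r d : ℕ}
    (hrd : r ≤ d) :
    coeff r (∏ i, f i) =
      ∑ k : ι → Fin (d + 1), if ∑ i, (k i : ℕ) = r then ∏ i, coeff (k i) (f i) else 0 := by
  rw [coeff_prod, ← Finset.sum_filter]
  symm
  refine Finset.sum_nbij (fun k => Finsupp.equivFunOnFinite.symm fun i => (k i : ℕ)) ?_ ?_ ?_ ?_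
  · intro k hk
    simpa using hk
  · intro k _ k' _ h
    funext i
    exact Fin.ext (DFunLike.congr_fun h i)
  · intro l hl
    have hsum : ∑ i, l i = r := by simpa using hl
    have hle : ∀ i, l i ≤ r := fun i =>
      hsum ▸ Finset.single_le_sum (fun i _ => (l i).zero_le) (Finset.mem_univ i)
    refine ⟨fun i => ⟨l i, by have := hle i; omega⟩, ?_, ?_⟩
    · simpa using hsum
    · ext i
      rfl
  · intro k _
    rfl

theorem coeff_X_pow_mul_prod {ι : Type*} [Fintype ι] [DecidableEq ι] (f : ι → R⟦X⟧) (s r : ℕ) :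
    coeff r (X ^ s * ∏ i, f i) =
      ∑ k : ι → Fin (r + 1), if s + ∑ i, (k i : ℕ) = r then ∏ i, coeff (k i) (f i) else 0 := by
  rw [coeff_X_pow_mul']
  split_ifs with hs
  · rw [coeff_prod_eq_sum_fin f (r.sub_le s)]
    simp only [eq_tsub_iff_add_eq_of_le hs, add_comm s]
  · refine (Finset.sum_eq_zero fun k _ => if_neg fun h => hs ?_).symm
    exact h ▸ Nat.le_add_right _ _

theorem one_add_X_eq_sum_bool : (1 + X : R⟦X⟧) = ∑ e : Bool, X ^ e.toNat := by
  simp [add_comm]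

/-- The generating series `(1 + X) ∏ⱼ 1/((1 - xⱼ² X)(1 - yⱼ² X))` of the character sums on the
left-hand side of the Pieri rule. -/
noncomputable def pieriSeries {n : ℕ} (x y : Fin n → R) : R⟦X⟧ :=
  (1 + X) * ∏ j, geomSeries (x j ^ 2) * geomSeries (y j ^ 2)

theorem coeff_pieriSeries {n : ℕ} (x y : Fin n → R) (r : ℕ) :
    coeff r (pieriSeries x y) =
      ∑ t : (Fin n → Fin (r + 1)) × (Fin n → Fin (r + 1)) × Bool,
        if t.2.2.toNat + ∑ i, ((t.1 i : ℕ) + (t.2.1 i : ℕ)) = r then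
          ∏ i, (y i ^ 2) ^ (t.1 i : ℕ) * (x i ^ 2) ^ (t.2.1 i : ℕ) else 0 := by
  let c : Fin n ⊕ Fin n → R := Sum.elim (fun j => y j ^ 2) fun j => x j ^ 2
  have hprod : ∏ j, geomSeries (x j ^ 2) * geomSeries (y j ^ 2) = ∏ i, geomSeries (c i) := by
    simp only [c, Fintype.prod_sum_type, Finset.prod_mul_distrib, Sum.elim_inl, Sum.elim_inr,
      mul_comm]
  let E : Bool × (Fin n ⊕ Fin n → Fin (r + 1)) ≃
      (Fin n → Fin (r + 1)) × (Fin n → Fin (r + 1)) × Bool :=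
    (Equiv.prodComm _ _).trans
      (((Equiv.sumArrowEquivProdArrow _ _ _).prodCongr (Equiv.refl _)).trans
        (Equiv.prodAssoc _ _ _))
  rw [pieriSeries, hprod, one_add_X_eq_sum_bool, Finset.sum_mul, map_sum]
  simp only [coeff_X_pow_mul_prod]
  rw [← Fintype.sum_prod_type']
  refine Fintype.sum_equiv E _ _ fun p => ?_
  simp [E, c, geomSeries, Fintype.sum_sum_type, Fintype.prod_sum_type, Finset.sum_add_distrib,
    Finset.prod_mul_distrib, Equiv.sumArrowEquivProdArrow]

end GeneratingSeries

section Triples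

variable {N : ℕ}

open Classical in
/-- The index set of the determinantal Pieri rule: triples `(m, l, e)` in which `m` interlaces both
`b` and `l` and which have total degree `r`. Here `e` is the `k₀` of the Pieri numbers, and
`e < 2 m₀ + δ` is the condition imposed on it. -/
noncomputable def interlacingTriples (δ : ℕ) (b : Fin (N + 1) → ℕ) (r : ℕ) :
    Finset ((Fin (N + 1) → ℕ) × (Fin (N + 1) → ℕ) × Bool) :=
  (interlacingBelow b ×ˢ Finset.Iic (fun i => b i + r) ×ˢ Finset.univ).filter fun z =>
    Interlaces z.1 z.2.1 ∧ z.2.2.toNat < 2 * z.1 0 + δ ∧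
      z.2.2.toNat + ∑ i, (b i - z.1 i) + ∑ i, (z.2.1 i - z.1 i) = r

theorem mem_interlacingTriples {δ : ℕ} {b : Fin (N + 1) → ℕ} {r : ℕ}
    {z : (Fin (N + 1) → ℕ) × (Fin (N + 1) → ℕ) × Bool} :
    z ∈ interlacingTriples δ b r ↔ Interlaces z.1 b ∧ Interlaces z.1 z.2.1 ∧
      z.2.2.toNat < 2 * z.1 0 + δ ∧
      z.2.2.toNat + ∑ i, (b i - z.1 i) + ∑ i, (z.2.1 i - z.1 i) = r := by
  simp only [interlacingTriples, Finset.mem_filter, Finset.mem_product, mem_interlacingBelow,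
    Finset.mem_Iic, Finset.mem_univ, and_true, and_assoc, and_congr_right_iff,
    and_iff_right_iff_imp]
  rintro hb ⟨hl, _, hr⟩ i
  have := Finset.single_le_sum (fun i _ => (z.2.1 i - z.1 i).zero_le) (Finset.mem_univ i)
  have := hb.1 i
  have := hl.1 i
  dsimp only
  omega

theorem sum_interlacingTriples {M : Type*} [AddCommMonoid M] (δ : ℕ) (b : Fin (N + 1) → ℕ)
    (r : ℕ) (f : (Fin (N + 1) → ℕ) → M) :
    ∑ z ∈ interlacingTriples δ b r, f z.2.1 =
      ∑ m ∈ interlacingBelow b, ∑ l ∈ interlacingAbove m (r + 1), ∑ e : Bool,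
        if e.toNat < 2 * m 0 + δ ∧ e.toNat + ∑ i, (b i - m i) + ∑ i, (l i - m i) = r
        then f l else 0 := by
  rw [Finset.sum_finset_product _ (interlacingBelow b) fun m =>
    (interlacingAbove m (r + 1) ×ˢ (Finset.univ : Finset Bool)).filter fun p =>
      p.2.toNat < 2 * m 0 + δ ∧ p.2.toNat + ∑ i, (b i - m i) + ∑ i, (p.1 i - m i) = r]
  · simp only [Finset.sum_filter, Finset.sum_product]
  · rintro ⟨m, l, e⟩
    simp only [mem_interlacingTriples, Finset.mem_filter, Finset.mem_product, mem_interlacingBelow,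
      mem_interlacingAbove, Finset.mem_univ, and_true, and_assoc, and_congr_right_iff]
    rintro _ hl
    refine ⟨fun h => ⟨?_, h⟩, And.right⟩
    have := Finset.single_le_sum (fun i _ => (l i - m i).zero_le) (Finset.mem_univ (Fin.last N))
    have := hl.1 (Fin.last N)
    omega

end Triples

section DeterminantalPieri

open PowerSeries

variable {R : Type*} [CommRing R]

theorem alternant_C {n : ℕ} (x y : Fin n → R) (δ : ℕ) (b : Fin n → ℕ) :
    alternant (fun j => C (x j)) (fun j => C (y j)) δ b = C (alternant x y δ b) := by
  rw [alternant, alternant, RingHom.map_det]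
  refine congrArg Matrix.det (Matrix.ext fun i j => ?_)
  simp [altRow]

theorem ite_one_add_X_eq_sum_bool {δ : ℕ} (hδ : δ ≤ 1) (m : ℕ) :
    (if m = 0 then (δ : R⟦X⟧) else 1 + X) =
      ∑ e : Bool, if e.toNat < 2 * m + δ then X ^ e.toNat else 0 := by
  rw [one_add_X_eq_sum_bool]
  rcases m.eq_zero_or_pos with rfl | hm
  · interval_cases δ <;> simp
  · have he : ∀ e : Bool, e.toNat < 2 * m + δ := fun e => by have := e.toNat_le; omega
    simp only [if_neg hm.ne', he, if_true]

theorem alternant_mul_coeff_pieriSeries {N : ℕ} {x y : Fin (N + 1) → R} (hxy : ∀ j, x j * y j = 1)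
    {δ : ℕ} (hδ : δ ≤ 1) {b : Fin (N + 1) → ℕ} (hb : StrictMono b) (r : ℕ) :
    alternant x y δ b * coeff r (pieriSeries x y) =
      ∑ z ∈ interlacingTriples δ b r, alternant x y δ z.2.1 := by
  have hgeom : ∀ c : R, geomSeries (c ^ 2) * (1 - X * C c ^ 2) = 1 := fun c => by
    rw [← map_pow, geomSeries_mul_one_sub]
  have hdvd := pow_dvd_mul_alternant_sub_sum (x := fun j => C (x j)) (y := fun j => C (y j))
    (fun j => by rw [← map_mul, hxy, map_one]) (fun j => hgeom (x j)) (fun j => hgeom (y j)) hδ hb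
    (r + 1)
  have hcoeff := X_pow_dvd_iff.1 hdvd r r.lt_succ_self
  rw [map_sub, sub_eq_zero, ← pieriSeries, alternant_C, coeff_mul_C, mul_comm, map_sum] at hcoeff
  rw [hcoeff, sum_interlacingTriples]
  refine Finset.sum_congr rfl fun m _ => ?_
  rw [Finset.mul_sum, map_sum]
  refine Finset.sum_congr rfl fun l _ => ?_
  rw [ite_one_add_X_eq_sum_bool hδ, Finset.sum_mul, Finset.sum_mul, map_sum]
  refine Finset.sum_congr rfl fun e _ => ?_
  by_cases he : e.toNat < 2 * m 0 + δ
  · rw [if_pos he, ← mul_assoc, ← pow_add, ← pow_add, alternant_C, coeff_mul_C, coeff_X_pow]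
    simp [he, eq_comm (a := r)]
  · simp [he]

end DeterminantalPieri

section LaurentRing

variable {n : ℕ}

/-- The power `y_j ^ z` of the `j`-th variable of the Laurent polynomial ring. -/
noncomputable def varPow (z : ℤ) (j : Fin n) : AddMonoidAlgebra ℤ (Fin n → ℤ) :=
  AddMonoidAlgebra.single (Pi.single j z) 1

theorem varPow_pow (z : ℤ) (j : Fin n) (k : ℕ) : varPow z j ^ k = varPow (z * k) j := by
  rw [varPow, AddMonoidAlgebra.single_pow, one_pow, varPow, ← Pi.single_smul, nsmul_eq_mul,
    mul_comm]

theorem varPow_mul_varPow (z w : ℤ) (j : Fin n) : varPow z j * varPow w j = varPow (z + w) j := by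
  rw [varPow, varPow, AddMonoidAlgebra.single_mul_single, one_mul, varPow, Pi.single_add]

theorem varPow_one_mul_varPow_neg_one (j : Fin n) : varPow 1 j * varPow (-1) j = 1 := by
  rw [varPow_mul_varPow, add_neg_cancel, varPow, Pi.single_zero, AddMonoidAlgebra.one_def]

theorem xpow_eq_prod_varPow {β : Fin n → ℚ} {p : Fin n → ℤ} (h : ∀ i, 2 * β i = p i) :
    xpow β = ∏ j, varPow (p j) j := by
  simp only [xpow, varPow, AddMonoidAlgebra.prod_single, h, Int.floor_intCast,
    Finset.prod_const_one, Finset.univ_sum_single]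

theorem altB_eq_alternant {β : Fin n → ℚ} {δ : ℕ} {b : Fin n → ℕ}
    (h : ∀ i, 2 * β i = 2 * b i + δ) : altB β = alternant (varPow 1) (varPow (-1)) δ b := by
  rw [alternant, Matrix.det_apply', altB, ← Equiv.sum_comp (Equiv.inv _)]
  refine Finset.sum_congr rfl fun σ _ => ?_
  have hentry : ∀ j, altRow (varPow 1) (varPow (-1)) δ (b (σ j)) j =
      ∑ e : Bool, (if e then (-1 : AddMonoidAlgebra ℤ (Fin n → ℤ)) else 1) *
        varPow ((if e then -1 else 1) * (2 * b (σ j) + δ)) j := fun j => by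
    simp [altRow, varPow_pow, sub_eq_neg_add]
  simp only [Matrix.of_apply, hentry, Fintype.prod_sum, Finset.mul_sum, Equiv.inv_apply]
  refine Finset.sum_congr rfl fun ε _ => ?_
  have hx : ∀ i, 2 * wAct σ⁻¹ ε β i =
      (((if ε i then (-1 : ℤ) else 1) * (2 * b (σ i) + δ) : ℤ) : ℚ) := fun i => by
    push_cast
    rw [wAct, mul_left_comm, h, inv_inv]
  rw [xpow_eq_prod_varPow hx, Finset.prod_mul_distrib, wDet, zsmul_eq_mul, Equiv.Perm.sign_inv]
  push_cast
  rw [mul_assoc]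

theorem coeff_pieriSeries_varPow (r : ℕ) :
    PowerSeries.coeff r (pieriSeries (varPow (n := n) 1) (varPow (-1))) =
      ∑ t : (Fin n → Fin (r + 1)) × (Fin n → Fin (r + 1)) × Bool,
        if (cond t.2.2 1 0) + ∑ i, ((t.1 i : ℕ) + (t.2.1 i : ℕ)) = r then
          xpow (fun i => ((t.2.1 i : ℕ) : ℚ) - ((t.1 i : ℕ) : ℚ))
        else 0 := by
  rw [coeff_pieriSeries]
  refine Finset.sum_congr rfl fun t _ => if_congr Iff.rfl ?_ rfl
  rw [xpow_eq_prod_varPow (p := fun i => 2 * (t.2.1 i : ℤ) - 2 * (t.1 i : ℤ))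
    fun i => by push_cast; ring]
  refine Finset.prod_congr rfl fun i _ => ?_
  simp only [varPow_pow, varPow_mul_varPow]
  congr 1
  push_cast
  ring

end LaurentRing

section PieriTuples

variable {N : ℕ} {γ : Fin (N + 1) → ℚ} {r : ℕ}
  {t : (Fin (N + 1) → ℕ) × (Fin (N + 1) → ℕ) × Bool}

/-- The weight `λ = γ + k̄ - k` reached from `γ` by the tuple `t = (k, k̄, k₀)`. -/
def target {n : ℕ} (γ : Fin n → ℚ) (t : (Fin n → ℕ) × (Fin n → ℕ) × Bool) : Fin n → ℚ :=
  fun i => γ i + t.2.1 i - t.1 i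

/-- The conditions on a tuple `t = (k, k̄, k₀)` in the definition of `b^λ_{γ,r}` for
`λ = target γ t`, with `λ - k̄` rewritten as `γ - k`. -/
def IsPieriTuple (γ : Fin (N + 1) → ℚ) (r : ℕ)
    (t : (Fin (N + 1) → ℕ) × (Fin (N + 1) → ℕ) × Bool) : Prop :=
  t.2.2.toNat + ∑ i, (t.1 i + t.2.1 i) = r ∧
    (∀ i : Fin N, target γ t i.castSucc ≤ γ i.succ - t.1 i.succ) ∧
    (∀ i : Fin N, γ i.castSucc ≤ γ i.succ - t.1 i.succ) ∧
    if t.2.2 then 0 < γ 0 - t.1 0 else 0 ≤ γ 0 - t.1 0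

theorem forall_fin_val_add_one_lt {P : ∀ i : Fin (N + 1), (i : ℕ) + 1 < N + 1 → Prop} :
    (∀ i h, P i h) ↔ ∀ i : Fin N, P i.castSucc (Nat.succ_lt_succ i.2) :=
  ⟨fun H _ => H _ _, fun H i h => H ⟨i, Nat.lt_of_succ_lt_succ h⟩⟩

theorem bPieri_eq_card (γ lam : Fin (N + 1) → ℚ) (r : ℕ) :
    bPieri γ lam r = Nat.card {t // IsPieriTuple γ r t ∧ target γ t = lam} := by
  refine Nat.card_congr (Equiv.subtypeEquivRight fun t => ?_)
  have htarget : (∀ i, (t.2.1 i : ℚ) - t.1 i = lam i - γ i) ↔ target γ t = lam := by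
    simp only [funext_iff, target, eq_sub_iff_add_eq', add_sub_assoc]
  rw [htarget, and_left_comm, and_comm]
  refine and_congr_left fun h => ?_
  subst h
  have hsub : ∀ i, target γ t i - t.2.1 i = γ i - t.1 i := fun i => by rw [target]; ring
  have hadd : ∀ i, target γ t i + t.1 i - t.2.1 i = γ i := fun i => by rw [target]; ring
  simp only [hsub, hadd, forall_fin_val_add_one_lt]
  exact and_congr Iff.rfl (and_congr Iff.rfl (and_congr Iff.rfl (forall_prop_of_true N.succ_pos)))

theorem IsPieriTuple.add_le (h : IsPieriTuple γ r t) (i : Fin (N + 1)) : t.1 i + t.2.1 i ≤ r := by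
  have := Finset.single_le_sum (fun i _ => (t.1 i + t.2.1 i).zero_le) (Finset.mem_univ i)
  have := h.1
  omega

open Classical in
/-- The finite set of all tuples `t` with `IsPieriTuple γ r t`. -/
noncomputable def pieriTuples (γ : Fin (N + 1) → ℚ) (r : ℕ) :
    Finset ((Fin (N + 1) → ℕ) × (Fin (N + 1) → ℕ) × Bool) :=
  (Finset.Iic (fun _ => r) ×ˢ Finset.Iic (fun _ => r) ×ˢ Finset.univ).filter (IsPieriTuple γ r)

theorem mem_pieriTuples : t ∈ pieriTuples γ r ↔ IsPieriTuple γ r t := by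
  simp only [pieriTuples, Finset.mem_filter, Finset.mem_product, Finset.mem_Iic, Finset.mem_univ,
    and_true, and_iff_right_iff_imp]
  exact fun h => ⟨fun i => (Nat.le_add_right _ _).trans (h.add_le i),
    fun i => (Nat.le_add_left _ _).trans (h.add_le i)⟩

theorem target_sub_eq_intCast {n : ℕ} (γ : Fin n → ℚ) (t : (Fin n → ℕ) × (Fin n → ℕ) × Bool)
    (i : Fin n) :
    target γ t i - γ i = ((t.2.1 i - t.1 i : ℤ) : ℚ) := by
  push_cast
  rw [target]
  ring

theorem IsPieriTuple.dominantB_target (h : IsPieriTuple γ r t) (hγ : DominantB γ) :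
    DominantB (target γ t) := by
  obtain ⟨-, htarget, -, hzero⟩ := h
  have hle : ∀ i, γ i - t.1 i ≤ target γ t i := fun i => by
    have : (0 : ℚ) ≤ t.2.1 i := Nat.cast_nonneg _
    rw [target]
    linarith
  have hmono : Monotone (target γ t) :=
    Fin.monotone_iff_le_succ.2 fun i => (htarget i).trans (hle _)
  have hnonneg : 0 ≤ γ 0 - t.1 0 := by split_ifs at hzero <;> linarith
  refine ⟨hmono, fun i => hnonneg.trans ((hle 0).trans (hmono (Fin.zero_le i))),
    hγ.2.2.imp (fun hcoord i => ?_) fun hcoord i => ?_⟩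
  all_goals
    obtain ⟨z, hz⟩ := hcoord i
    refine ⟨z + (t.2.1 i - t.1 i), ?_⟩
    rw [sub_eq_iff_eq_add.1 (target_sub_eq_intCast γ t i), hz, Int.cast_add]
    ring

open Classical in
theorem bPieri_eq_card_filter (γ lam : Fin (N + 1) → ℚ) (r : ℕ) :
    bPieri γ lam r = ((pieriTuples γ r).filter fun t => target γ t = lam).card := by
  rw [bPieri_eq_card]
  exact Nat.subtype_card _ fun t => by rw [Finset.mem_filter, mem_pieriTuples]

theorem finsum_bPieri_smul {M : Type*} [AddCommGroup M] (hγ : DominantB γ) (r : ℕ)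
    (f : (Fin (N + 1) → ℚ) → M) :
    ∑ᶠ lam ∈ {lam | DominantB lam ∧ ∀ i, ∃ z : ℤ, lam i - γ i = z},
      (bPieri γ lam r : ℤ) • f lam = ∑ t ∈ pieriTuples γ r, f (target γ t) := by
  classical
  rw [Finset.sum_comp f (target γ), finsum_mem_eq_sum_of_subset
    (t := (pieriTuples γ r).image (target γ))]
  · simp only [bPieri_eq_card_filter, natCast_zsmul]
  · rintro lam ⟨-, hlam⟩
    have hne : bPieri γ lam r ≠ 0 := fun h => hlam (by simp only [h, Nat.cast_zero, zero_smul])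
    rw [bPieri_eq_card_filter, Finset.card_ne_zero] at hne
    obtain ⟨t, ht⟩ := hne
    exact Finset.mem_image.2 ⟨t, Finset.mem_filter.1 ht⟩
  · intro lam hlam
    obtain ⟨t, ht, rfl⟩ := Finset.mem_image.1 hlam
    exact ⟨(mem_pieriTuples.1 ht).dominantB_target hγ, fun i => ⟨_, target_sub_eq_intCast γ t i⟩⟩

end PieriTuples

section ShiftedWeights

variable {N : ℕ} {γ : Fin (N + 1) → ℚ} {δ r : ℕ}

theorem exists_shiftedWeight (hγ : DominantB γ) :
    ∃ δ ≤ (1 : ℕ), ∃ b : Fin (N + 1) → ℕ, StrictMono b ∧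
      ∀ i, (γ + rhoB (N + 1)) i = b i + (δ : ℚ) / 2 := by
  obtain ⟨hmono, hpos, hcoord⟩ := hγ
  obtain ⟨δ, hδ, z, hz⟩ : ∃ δ ≤ (1 : ℕ), ∃ z : Fin (N + 1) → ℤ,
      ∀ i, (γ + rhoB (N + 1)) i = z i + (δ : ℚ) / 2 := by
    rcases hcoord with hcoord | hcoord <;> choose z hz using hcoord
    · refine ⟨1, le_rfl, fun i => z i + i, fun i => ?_⟩
      simp [hz, rhoB, add_assoc]
    · refine ⟨0, zero_le_one, fun i => z i + i + 1, fun i => ?_⟩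
      simp only [Pi.add_apply, hz, rhoB]
      push_cast
      ring
  have hstrict : StrictMono z := fun i j hij => by
    have hlt : (γ + rhoB (N + 1)) i < (γ + rhoB (N + 1)) j :=
      add_lt_add_of_le_of_lt (hmono hij.le) (by simpa [rhoB] using hij)
    rw [hz, hz] at hlt
    exact_mod_cast lt_of_add_lt_add_right hlt
  have hnonneg : ∀ i, 0 ≤ z i := fun i => by
    have : (δ : ℚ) ≤ 1 := by exact_mod_cast hδ
    have hrho : (1 : ℚ) / 2 ≤ (γ + rhoB (N + 1)) i :=
      le_add_of_nonneg_of_le (hpos i) (le_add_of_nonneg_left (Nat.cast_nonneg _))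
    have : (0 : ℚ) ≤ z i := by linarith [hz i]
    exact_mod_cast this
  lift z to Fin (N + 1) → ℕ using hnonneg
  exact ⟨δ, hδ, z, fun _ _ hij => Int.ofNat_lt.1 (hstrict hij), fun i => by simpa using hz i⟩

theorem interlaces_add_iff {m k : Fin (N + 1) → ℕ} :
    Interlaces m (m + k) ↔ ∀ i : Fin N, (m + k) i.castSucc < m i.succ :=
  and_iff_right fun _ => Nat.le_add_right _ _

theorem isPieriTuple_iff {m k k' : Fin (N + 1) → ℕ} {e : Bool}
    (hγ : ∀ i, (γ + rhoB (N + 1)) i = (m + k) i + (δ : ℚ) / 2) :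
    IsPieriTuple γ r (k, k', e) ↔ e.toNat + ∑ i, (k i + k' i) = r ∧ Interlaces m (m + k') ∧
      Interlaces m (m + k) ∧ e.toNat < 2 * m 0 + δ := by
  have hγi : ∀ i, γ i = (m + k) i + ((δ : ℚ) / 2 - 1 / 2 - i) := fun i => by
    have := hγ i
    simp only [Pi.add_apply (M := fun _ => ℚ), rhoB] at this
    linarith
  have hsub : ∀ i, γ i - k i = m i + ((δ : ℚ) / 2 - 1 / 2 - i) := fun i => by
    rw [hγi, Pi.add_apply, Nat.cast_add]
    ring
  have htarget : ∀ i, target γ (k, k', e) i = (m + k') i + ((δ : ℚ) / 2 - 1 / 2 - i) := fun i => by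
    rw [target, add_sub_right_comm, hsub, Pi.add_apply, Nat.cast_add]
    ring
  have hlt : ∀ (l : Fin (N + 1) → ℕ) (i : Fin N),
      (l i.castSucc : ℚ) + ((δ : ℚ) / 2 - 1 / 2 - (i.castSucc : ℕ)) ≤
        m i.succ + ((δ : ℚ) / 2 - 1 / 2 - (i.succ : ℕ)) ↔ l i.castSucc < m i.succ := fun l i => by
    rw [← Nat.succ_le_iff, ← Nat.cast_le (α := ℚ), Fin.val_castSucc, Fin.val_succ]
    push_cast
    constructor <;> intro h <;> linarith
  have hzero : γ 0 - k 0 = (((2 * m 0 + δ : ℕ) : ℚ) - 1) / 2 := by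
    rw [hsub, Fin.val_zero]
    push_cast
    ring
  have hif : (if e then 0 < γ 0 - k 0 else 0 ≤ γ 0 - k 0) ↔ e.toNat < 2 * m 0 + δ := by
    rw [hzero]
    generalize 2 * m 0 + δ = c
    cases e <;> simp [div_nonneg_iff, Nat.one_le_iff_ne_zero, Nat.pos_iff_ne_zero]
  rw [IsPieriTuple, hif]
  simp only [interlaces_add_iff, htarget, hsub, hγi (Fin.castSucc _), hlt]

theorem mk_mem_interlacingTriples_iff {m k k' : Fin (N + 1) → ℕ} {e : Bool}
    (hγ : ∀ i, (γ + rhoB (N + 1)) i = (m + k) i + (δ : ℚ) / 2) :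
    (m, m + k', e) ∈ interlacingTriples δ (m + k) r ↔ (k, k', e) ∈ pieriTuples γ r := by
  rw [mem_pieriTuples, isPieriTuple_iff hγ, mem_interlacingTriples]
  simp only [Pi.add_apply, Nat.add_sub_cancel_left, Finset.sum_add_distrib, add_assoc]
  tauto

theorem IsPieriTuple.le_shiftedWeight {t : (Fin (N + 1) → ℕ) × (Fin (N + 1) → ℕ) × Bool}
    {b : Fin (N + 1) → ℕ} (h : IsPieriTuple γ r t) (hδ : δ ≤ 1)
    (hγ : ∀ i, (γ + rhoB (N + 1)) i = b i + (δ : ℚ) / 2) (i : Fin (N + 1)) : t.1 i ≤ b i := by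
  obtain ⟨-, -, hsucc, hzero⟩ := h
  simp only [Pi.add_apply, rhoB] at hγ
  rw [← Nat.cast_le (α := ℚ)]
  cases i using Fin.cases with
  | zero =>
    have hnonneg : 0 ≤ γ 0 - t.1 0 := by split_ifs at hzero <;> linarith
    have : (δ : ℚ) ≤ 1 := by exact_mod_cast hδ
    have := hγ 0
    rw [Fin.val_zero, Nat.cast_zero] at this
    linarith
  | succ i =>
    have : (0 : ℚ) ≤ b i.castSucc := Nat.cast_nonneg _
    have hcast := hγ i.castSucc
    have hsucc' := hγ i.succ
    rw [Fin.val_castSucc] at hcast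
    rw [Fin.val_succ, Nat.cast_succ] at hsucc'
    linarith [hsucc i]

theorem sum_pieriTuples {M : Type*} [AddCommMonoid M] (hδ : δ ≤ 1) {b : Fin (N + 1) → ℕ}
    (hγ : ∀ i, (γ + rhoB (N + 1)) i = b i + (δ : ℚ) / 2) (r : ℕ) (f : (Fin (N + 1) → ℚ) → M) :
    ∑ t ∈ pieriTuples γ r, f (target γ t + rhoB (N + 1)) =
      ∑ z ∈ interlacingTriples δ b r, f fun i => z.2.1 i + (δ : ℚ) / 2 := by
  have exists_of_mem {m l e} (hz : (m, l, e) ∈ interlacingTriples δ b r) :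
      (∃ k, b = m + k) ∧ ∃ k', l = m + k' := by
    obtain ⟨hb, hl, -⟩ := mem_interlacingTriples.1 hz
    exact ⟨exists_add_of_le hb.1, exists_add_of_le hl.1⟩
  have exists_of_mem' {k k' e} (ht : (k, k', e) ∈ pieriTuples γ r) : ∃ m, b = m + k :=
    ⟨b - k, (tsub_add_cancel_of_le ((mem_pieriTuples.1 ht).le_shiftedWeight hδ hγ)).symm⟩
  refine Finset.sum_nbij' (fun t => (b - t.1, b - t.1 + t.2.1, t.2.2))
    (fun z => (b - z.1, z.2.1 - z.1, z.2.2)) ?_ ?_ ?_ ?_ ?_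
  · rintro ⟨k, k', e⟩ ht
    obtain ⟨m, rfl⟩ := exists_of_mem' ht
    simpa only [add_tsub_cancel_right, mk_mem_interlacingTriples_iff hγ] using ht
  · rintro ⟨m, l, e⟩ hz
    obtain ⟨⟨k, rfl⟩, k', rfl⟩ := exists_of_mem hz
    simpa only [add_tsub_cancel_left, mk_mem_interlacingTriples_iff hγ] using hz
  · rintro ⟨k, k', e⟩ ht
    obtain ⟨m, rfl⟩ := exists_of_mem' ht
    simp only [add_tsub_cancel_right, add_tsub_cancel_left]
  · rintro ⟨m, l, e⟩ hz
    obtain ⟨⟨k, rfl⟩, k', rfl⟩ := exists_of_mem hz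
    simp only [add_tsub_cancel_right, add_tsub_cancel_left]
  · rintro ⟨k, k', e⟩ ht
    obtain ⟨m, rfl⟩ := exists_of_mem' ht
    refine congrArg f (funext fun i => ?_)
    have := hγ i
    simp only [Pi.add_apply, target, add_tsub_cancel_right] at this ⊢
    push_cast at this ⊢
    linarith

end ShiftedWeights

end PieriB

/-- Pieri rule of type `B_n` at the level of Weyl alternants:
`a_{γ+ρ} · char V(rΛ_{n-1}) = ∑_λ b^λ_{γ,r} a_{λ+ρ}`. -/
theorem pieri_B (n : ℕ) (hn : 1 ≤ n) (γ : Fin n → ℚ) (hγ : DominantB γ) (r : ℕ) :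
    altB (γ + rhoB n) *
      (∑ t : (Fin n → Fin (r + 1)) × (Fin n → Fin (r + 1)) × Bool,
        if (cond t.2.2 1 0) + ∑ i, ((t.1 i : ℕ) + (t.2.1 i : ℕ)) = r then
          xpow (fun i => ((t.2.1 i : ℕ) : ℚ) - ((t.1 i : ℕ) : ℚ))
        else 0) =
    ∑ᶠ lam ∈ {lam : Fin n → ℚ | DominantB lam ∧ ∀ i, ∃ z : ℤ, lam i - γ i = z},
      (bPieri γ lam r : ℤ) • altB (lam + rhoB n) := by
  obtain ⟨N, rfl⟩ : ∃ N, n = N + 1 := ⟨n - 1, (Nat.sub_add_cancel hn).symm⟩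
  obtain ⟨δ, hδ, b, hb, hγb⟩ := PieriB.exists_shiftedWeight hγ
  have haltB : ∀ (β : Fin (N + 1) → ℚ) (l : Fin (N + 1) → ℕ), (∀ i, β i = l i + (δ : ℚ) / 2) →
      altB β = PieriB.alternant (PieriB.varPow 1) (PieriB.varPow (-1)) δ l := fun β l h =>
    PieriB.altB_eq_alternant fun i => by rw [h]; ring
  rw [PieriB.finsum_bPieri_smul hγ r fun lam => altB (lam + rhoB (N + 1)),
    PieriB.sum_pieriTuples hδ hγb, ← PieriB.coeff_pieriSeries_varPow, haltB _ b hγb,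
    PieriB.alternant_mul_coeff_pieriSeries PieriB.varPow_one_mul_varPow_neg_one hδ hb]
  exact Finset.sum_congr rfl fun z _ => (haltB _ z.2.1 fun _ => rfl).symm
end

section
/- (Pieri rule for D_n, stated at the level of Weyl alternants.) Let n ≥ 2, let γ be a dominant weight of type D_n, and let r ∈ ℕ. In the Laurent polynomial ring ℤ[y_1^{±1},…,y_n^{±1}], where for β ∈ (ℤ/2)^n we write x^β = Π_{i=1}^n y_i^{2β_i} and a^{D_n}_β = Σ_{σ∈W_{D_n}} det(σ)·x^{σ(β)}, the following identity holds: a^{D_n}_{γ+ρ_{D_n}} · ( Σ x^{(k̄_n − k_n, …, k̄_1 − k_1)} ) = Σ_λ d^λ_{γ,r} · a^{D_n}_{λ+ρ_{D_n}}, where the sum on the left is over all tuples (k_1,…,k_n,k̄_1,…,k̄_n) ∈ ℕ^{2n} with min(k_1, k̄_1) = 0 and Σ_{i=1}^n (k_i + k̄_i) = r, and the sum on the right is over all dominant weights λ of type D_n with λ − γ ∈ ℤ^n (only finitely many terms are nonzero). (The left factor is the character of the irreducible so_{2n}-module V(rΛ_{n−1}), so d^λ_{γ,r} is the multiplicity of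 V(λ) in V(γ) ⊗ V(rΛ_{n−1}).) -/
open scoped BigOperators

/-!
The character on the left is the coefficient of `X ^ r` in a product over the coordinates which,
multiplied by `(1 - X ^ 2) ^ (n - 1)`, becomes the function `v ↦ ∏ i, X ^ |v i|` on weights.
Multiplied by an alternant, this product function turns into half the sum of the two determinants
of the kernels `X ^ |a i - b j| ± X ^ |a i + b j|`: the sum over both signs discards the odd sign
changes. In the Weyl chamber the last row of such a determinant, or its last column, is almost
proportional to the preceding one, so that half their sum is the product of one
`X ^ |a i - b i|` for each coordinate and one factor `1 - X ^ l` for each pair of consecutive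
coordinates, where `l` is twice the gap between the intervals they span. Dividing by
`(1 - X ^ 2) ^ (n - 1)` turns these factors into geometric sums `1 + X ^ 2 + ⋯ + X ^ (l - 2)`,
which count the free parameters `min (k i) (k' i)` of the Pieri tuples: all the inequalities
defining the Pieri numbers say that these minima are less than the gaps. An alternating element
is determined by its coefficients in the chamber, which are thus its coordinates in the basis of
alternants.
-/

namespace WeylD

section Kernel

variable {R : Type*} [CommRing R] {n : ℕ}

/-- The folding of the convolution kernel `h (a - b)` over `±b`, weighted by the sign `s`. Adding
the determinants for `s = 1` and `s = -1` leaves twice the terms with an even number of sign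
changes, which is how the Weyl group of type `D` is singled out. -/
def kernel (h : ℤ → R) (s : ℤˣ) (a b : ℤ) : R :=
  h (a - b) + s • h (a + b)

/-- The determinant of the folded kernel. -/
def foldDet (h : ℤ → R) (s : ℤˣ) (a b : Fin n → ℤ) : R :=
  (Matrix.of fun i j => kernel h s (a i) (b j)).det

/-- `q ^ (|m| / 2)` for even `m`, extended by zero to odd `m`; exponents are halved because
weights are doubled to make them integral. -/
def halfPow (q : R) (m : ℤ) : R :=
  if Even m then q ^ (m.natAbs / 2) else 0

theorem halfPow_even (q : R) : Function.Even (halfPow q) := fun m => by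
  simp [halfPow]

theorem halfPow_of_odd (q : R) {m : ℤ} (hm : ¬Even m) : halfPow q m = 0 :=
  if_neg hm

theorem kernel_comm {h : ℤ → R} (hh : h.Even) (s : ℤˣ) (a b : ℤ) :
    kernel h s a b = kernel h s b a := by
  rw [kernel, kernel, ← neg_sub b a, hh, add_comm a b]

theorem kernel_neg_left {h : ℤ → R} (hh : h.Even) (s : ℤˣ) (a b : ℤ) :
    kernel h s (-a) b = s • kernel h s a b := by
  rw [kernel, kernel, ← neg_add', hh, neg_add_eq_sub, ← neg_sub a b, hh, smul_add, smul_smul,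
    Int.units_mul_self, one_smul, add_comm]

theorem exists_kernel_abs_left {h : ℤ → R} (hh : h.Even) (s : ℤˣ) (a : ℤ) :
    ∃ t : ℤˣ, ∀ b, kernel h s |a| b = t • kernel h s a b := by
  rcases abs_choice a with ha | ha <;> rw [ha]
  · exact ⟨1, fun b => (one_smul _ _).symm⟩
  · exact ⟨s, kernel_neg_left hh s a⟩

theorem kernel_one_add_kernel_neg_one (h : ℤ → R) (a b : ℤ) :
    kernel h 1 a b + kernel h (-1) a b = 2 * h (a - b) := by
  rw [kernel, kernel, one_smul, Units.neg_smul, one_smul]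
  ring

theorem kernel_halfPow_of_odd (q : R) (s : ℤˣ) {a b : ℤ} (hab : ¬Even (a - b)) :
    kernel (halfPow q) s a b = 0 := by
  rw [kernel, halfPow_of_odd q hab, halfPow_of_odd q (m := a + b) (by grind), smul_zero, add_zero]

theorem halfPow_mul_halfPow (q : R) {a b c : ℤ} (hca : c ≤ a) (h : Even (a - c)) :
    halfPow q (a - c) * halfPow q (c - b) = halfPow q (a - b) * q ^ (min a b - c).toNat := by
  by_cases hcb : Even (c - b)
  · rw [halfPow, halfPow, halfPow, if_pos h, if_pos hcb, if_pos (by grind), ← pow_add, ← pow_add]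
    congr 1
    grind
  · have hab : ¬Even (a - b) := by grind
    rw [halfPow_of_odd q hcb, halfPow_of_odd q hab, mul_zero, zero_mul]

theorem halfPow_mul_halfPow_of_le (q : R) {a b c : ℤ} (hbc : b ≤ c) (hca : c ≤ a)
    (h : Even (a - c)) : halfPow q (a - c) * halfPow q (c - b) = halfPow q (a - b) := by
  rw [halfPow_mul_halfPow q hca h, Int.toNat_of_nonpos (by omega), pow_zero, mul_one]

theorem kernel_sub_halfPow_mul_kernel (q : R) (s : ℤˣ) {a b c : ℤ} (hc : 0 ≤ c) (hca : c ≤ a)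
    (hb : 0 ≤ b) (h : Even (a - c)) :
    kernel (halfPow q) s a b - halfPow q (a - c) * kernel (halfPow q) s c b =
      halfPow q (a - b) * (1 - q ^ (min a b - c).toNat) := by
  have hadd : halfPow q (a - c) * halfPow q (c + b) = halfPow q (a + b) := by
    simpa using halfPow_mul_halfPow_of_le q (b := -b) (by omega) hca h
  rw [kernel, kernel, mul_add, halfPow_mul_halfPow q hca h, mul_smul_comm, hadd]
  ring

theorem kernel_eq_halfPow_mul_kernel (q : R) (s : ℤˣ) {a b c : ℤ} (hbc : |b| ≤ c) (hca : c ≤ a)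
    (h : Even (a - c)) :
    kernel (halfPow q) s a b = halfPow q (a - c) * kernel (halfPow q) s c b := by
  obtain ⟨hbl, hbr⟩ := abs_le.mp hbc
  have hadd : halfPow q (a - c) * halfPow q (c + b) = halfPow q (a + b) := by
    simpa using halfPow_mul_halfPow_of_le q (b := -b) (by omega) hca h
  rw [kernel, kernel, mul_add, halfPow_mul_halfPow_of_le q hbr hca h, mul_smul_comm, hadd]

theorem det_eq_of_last_row_eq_smul (M : Matrix (Fin (n + 1)) (Fin (n + 1)) R) (i : Fin n) (c : R)
    (h : ∀ j : Fin n, M (Fin.last n) j.castSucc = c * M i.castSucc j.castSucc) :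
    M.det = (M (Fin.last n) (Fin.last n) - c * M i.castSucc (Fin.last n)) *
      (M.submatrix Fin.castSucc Fin.castSucc).det := by
  have hminor : (M.updateRow (Fin.last n) (M (Fin.last n) + -c • M i.castSucc)).submatrix
      Fin.castSucc Fin.castSucc = M.submatrix Fin.castSucc Fin.castSucc :=
    Matrix.ext fun k l => by simp
  rw [← Matrix.det_updateRow_add_smul_self M (Fin.castSucc_lt_last i).ne' (-c),
    Matrix.det_succ_row _ (Fin.last n), Fin.sum_univ_castSucc, Finset.sum_eq_zero, zero_add,
    Fin.succAbove_last, hminor]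
  · simp [← sub_eq_add_neg, ← two_mul]
  · simp [h]

theorem foldDet_comm {h : ℤ → R} (hh : h.Even) (s : ℤˣ) (a b : Fin n → ℤ) :
    foldDet h s a b = foldDet h s b a := by
  rw [foldDet, ← Matrix.det_transpose, foldDet]
  congr 1
  exact Matrix.ext fun i j => kernel_comm hh s _ _

theorem foldDet_comp_perm (h : ℤ → R) (s : ℤˣ) (a b : Fin n → ℤ) (σ : Equiv.Perm (Fin n)) :
    foldDet h s (a ∘ σ) b = Equiv.Perm.sign σ • foldDet h s a b := by
  rw [Units.smul_def, zsmul_eq_mul]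
  exact Matrix.det_permute σ (Matrix.of fun i j => kernel h s (a i) (b j))

theorem foldDet_smul_left {h : ℤ → R} (hh : h.Even) (s : ℤˣ) (a b : Fin n → ℤ)
    {ε : Fin n → ℤˣ} (hε : ∏ i, ε i = 1) :
    foldDet h s (fun i => ε i • a i) b = foldDet h s a b := by
  rcases Int.units_eq_one_or s with rfl | rfl
  · refine congrArg Matrix.det (Matrix.ext fun i j => ?_)
    rcases Int.units_eq_one_or (ε i) with hi | hi <;> simp [hi, kernel_neg_left hh]
  · have hdet := Matrix.det_mul_column (fun i => (((ε i : ℤˣ) : ℤ) : R))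
      (Matrix.of fun i j => kernel h (-1) (a i) (b j))
    have hprod : ∏ i, (((ε i : ℤˣ) : ℤ) : R) = 1 := by
      exact_mod_cast congrArg (fun u : ℤˣ => ((u : ℤ) : R)) hε
    rw [hprod, one_mul] at hdet
    rw [foldDet, foldDet, ← hdet]
    refine congrArg Matrix.det (Matrix.ext fun i j => ?_)
    rcases Int.units_eq_one_or (ε i) with hi | hi <;> simp [hi, kernel_neg_left hh]

/-- The integral points of the interior of the type `D` Weyl chamber. -/
def Chamber (a : Fin (n + 1) → ℤ) : Prop :=
  StrictMono (fun i => |a i|) ∧ ∀ i, i ≠ 0 → 0 ≤ a i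

/-- The signed distance from the `i`-th coordinates of `a` and `b` up to the next ones: it bounds
the free multiplicities in the Pieri rule. -/
def gap (a b : Fin (n + 1) → ℤ) (i : Fin n) : ℤ :=
  min (a i.succ) (b i.succ) - max |a i.castSucc| |b i.castSucc|

theorem gap_comm (a b : Fin (n + 1) → ℤ) (i : Fin n) : gap a b i = gap b a i := by
  rw [gap, gap, min_comm, max_comm]

theorem Chamber.init {a : Fin (n + 2) → ℤ} (ha : Chamber a) :
    Chamber fun i : Fin (n + 1) => a i.castSucc :=
  ⟨ha.1.comp Fin.strictMono_castSucc, fun i hi => ha.2 _ (by simpa using hi)⟩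

theorem Chamber.abs_castSucc_lt {a : Fin (n + 1) → ℤ} (ha : Chamber a) (i : Fin n) :
    |a i.castSucc| < a i.succ := by
  simpa only [abs_of_nonneg (ha.2 _ (Fin.succ_ne_zero i))] using ha.1 i.castSucc_lt_succ

theorem foldDet_succ (q : R) (s : ℤˣ) {a b : Fin (n + 2) → ℤ} (ha : Chamber a) (hb : Chamber b)
    (hab : ∀ i j, Even (a i - b j)) :
    foldDet (halfPow q) s a b =
      halfPow q (a (Fin.last _) - b (Fin.last _)) * (1 - q ^ (gap a b (Fin.last n)).toNat) *
        foldDet (halfPow q) s (fun i : Fin (n + 1) => a i.castSucc) fun i => b i.castSucc := by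
  wlog hle : |b (Fin.last n).castSucc| ≤ |a (Fin.last n).castSucc| generalizing a b
  · rw [foldDet_comm (halfPow_even q), this hb ha (fun i j => by simpa using (hab j i).neg)
      (le_of_not_ge hle), gap_comm, ← halfPow_even q, neg_sub, foldDet_comm (halfPow_even q)]
  obtain ⟨t, ht⟩ := exists_kernel_abs_left (halfPow_even q) s (a (Fin.last n).castSucc)
  set c := |a (Fin.last n).castSucc|
  have hca : c < a (Fin.last n).succ := ha.abs_castSucc_lt _
  have hpar : Even (a (Fin.last n).succ - c) := by
    have := hab (Fin.last n).succ 0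
    have := hab (Fin.last n).castSucc 0
    grind
  have hrow (j : Fin (n + 1)) : |b j.castSucc| ≤ c :=
    (hb.1.monotone (Fin.castSucc_le_castSucc_iff.mpr (Fin.le_last j))).trans hle
  rw [foldDet, det_eq_of_last_row_eq_smul _ (Fin.last n)
    (halfPow q (a (Fin.last n).succ - c) * ((t : ℤ) : R))]
  · congr 1
    simp only [Matrix.of_apply, mul_assoc, ← Fin.succ_last]
    rw [← zsmul_eq_mul, ← Units.smul_def, ← ht, kernel_sub_halfPow_mul_kernel q s (abs_nonneg _)
      hca.le (hb.2 _ (Fin.succ_ne_zero _)) hpar, gap, max_eq_left hle]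
  · intro j
    simp only [Matrix.of_apply, mul_assoc, ← Fin.succ_last]
    rw [← zsmul_eq_mul, ← Units.smul_def, ← ht,
      kernel_eq_halfPow_mul_kernel q s (hrow j) hca.le hpar]

theorem foldDet_of_chamber (q : R) (s : ℤˣ) {a b : Fin (n + 1) → ℤ} (ha : Chamber a)
    (hb : Chamber b) (hab : ∀ i j, Even (a i - b j)) :
    foldDet (halfPow q) s a b = kernel (halfPow q) s (a 0) (b 0) *
      ∏ i : Fin n, halfPow q (a i.succ - b i.succ) * (1 - q ^ (gap a b i).toNat) := by
  induction n with
  | zero => simp [foldDet]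
  | succ n ih =>
    rw [foldDet_succ q s ha hb hab, ih ha.init hb.init fun i j => hab _ _, Fin.prod_univ_castSucc,
      mul_comm, mul_assoc]
    rfl

theorem foldDet_halfPow_of_odd (q : R) (s : ℤˣ) {a b : Fin n → ℤ} {i : Fin n}
    (hi : ∀ j, ¬Even (a i - b j)) : foldDet (halfPow q) s a b = 0 :=
  Matrix.det_eq_zero_of_row_eq_zero i fun j => kernel_halfPow_of_odd q s (hi j)

theorem foldDet_one_add_foldDet_neg_one (q : R) {a b : Fin (n + 1) → ℤ} (ha : Chamber a)
    (hb : Chamber b) (hpar : ∀ i j, Even (b i - b j)) :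
    foldDet (halfPow q) 1 a b + foldDet (halfPow q) (-1) a b =
      2 * ((∏ i, halfPow q (a i - b i)) * ∏ i : Fin n, (1 - q ^ (gap a b i).toNat)) := by
  by_cases hab : ∀ i, Even (a i - b i)
  · have hab' (i j) : Even (a i - b j) := by simpa using (hab i).add (hpar i j)
    rw [foldDet_of_chamber q 1 ha hb hab', foldDet_of_chamber q (-1) ha hb hab', ← add_mul,
      kernel_one_add_kernel_neg_one, Fin.prod_univ_succ, Finset.prod_mul_distrib, mul_assoc,
      mul_assoc]
  · obtain ⟨i, hi⟩ := not_forall.mp hab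
    have hrow (j) : ¬Even (a i - b j) := fun h => hi (by simpa using h.sub (hpar i j))
    rw [foldDet_halfPow_of_odd q 1 hrow, foldDet_halfPow_of_odd q (-1) hrow,
      Finset.prod_eq_zero (Finset.mem_univ i) (halfPow_of_odd q hi), zero_mul, mul_zero, add_zero]

end Kernel

section Alternating

variable {n : ℕ} {M : Type*} [AddCommGroup M]

/-- The functions on `ℤ ^ n` which are alternating for the Weyl group of type `D`: permutations of
the coordinates act by their sign, even sign changes act trivially. -/
def alternating (n : ℕ) (M : Type*) [AddCommGroup M] : AddSubgroup ((Fin n → ℤ) → M) where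
  carrier := {F | (∀ (σ : Equiv.Perm (Fin n)) (μ), F (μ ∘ σ) = Equiv.Perm.sign σ • F μ) ∧
    ∀ (ε : Fin n → ℤˣ) (μ), ∏ i, ε i = 1 → F (fun i => ε i • μ i) = F μ}
  add_mem' hF hG := ⟨fun σ μ => by simp [hF.1, hG.1], fun ε μ hε => by simp [hF.2, hG.2, hε]⟩
  zero_mem' := by simp
  neg_mem' hF := ⟨fun σ μ => by simp [hF.1], fun ε μ hε => by simp [hF.2, hε]⟩

theorem map_mem_alternating {N : Type*} [AddCommGroup N] (φ : M →+ N) {F : (Fin n → ℤ) → M}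
    (hF : F ∈ alternating n M) : (fun μ => φ (F μ)) ∈ alternating n N :=
  ⟨fun σ μ => by simp [hF.1, Units.smul_def], fun ε μ hε => congrArg φ (hF.2 ε μ hε)⟩

theorem mem_alternating_of_mul_mem {R : Type*} [CommRing R] [IsDomain R] {c : R} (hc : c ≠ 0)
    {F : (Fin n → ℤ) → R} (hF : (fun μ => c * F μ) ∈ alternating n R) : F ∈ alternating n R :=
  ⟨fun σ μ => mul_left_cancel₀ hc <| by rw [mul_smul_comm]; exact hF.1 σ μ,
    fun ε μ hε => mul_left_cancel₀ hc (hF.2 ε μ hε)⟩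

theorem foldDet_mem_alternating {R : Type*} [CommRing R] {h : ℤ → R} (hh : h.Even) (s : ℤˣ)
    (b : Fin n → ℤ) : (fun μ => foldDet h s μ b) ∈ alternating n R :=
  ⟨fun σ μ => foldDet_comp_perm h s μ b σ, fun _ μ hε => foldDet_smul_left hh s μ b hε⟩

theorem exists_chamber {μ : Fin (n + 1) → ℤ} (hμ : Function.Injective fun i => |μ i|) :
    ∃ (σ : Equiv.Perm (Fin (n + 1))) (ε : Fin (n + 1) → ℤˣ),
      ∏ i, ε i = 1 ∧ Chamber fun i => ε i • μ (σ i) := by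
  set σ := Tuple.sort fun i => |μ i|
  have hσ : StrictMono fun i => |μ (σ i)| :=
    (Tuple.monotone_sort fun i => |μ i|).strictMono_of_injective (hμ.comp σ.injective)
  choose e he using fun i : Fin n => (show ∃ u : ℤˣ, 0 ≤ u • μ (σ i.succ) from
    (le_total 0 (μ (σ i.succ))).elim (fun h => ⟨1, by simpa⟩) fun h => ⟨-1, by simpa⟩)
  refine ⟨σ, Fin.cons (∏ i, e i) e, ?_, ?_, ?_⟩
  · rw [Fin.prod_univ_succ, Fin.cons_zero]
    simp only [Fin.cons_succ, Int.units_mul_self]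
  · have habs (u : ℤˣ) : |(u : ℤ)| = 1 := Int.isUnit_iff_abs_eq.mp u.isUnit
    simpa only [Units.smul_def, smul_eq_mul, abs_mul, habs, one_mul] using hσ
  · exact Fin.cases (fun h => absurd rfl h) fun i _ => he i

theorem apply_eq_zero_of_abs_eq [IsAddTorsionFree M] {F : (Fin n → ℤ) → M}
    (hF : F ∈ alternating n M) {μ : Fin n → ℤ} {i j : Fin n} (hij : i ≠ j)
    (h : |μ i| = |μ j|) : F μ = 0 := by
  obtain ⟨u, hu⟩ : ∃ u : ℤˣ, μ i = u • μ j :=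
    (abs_eq_abs.mp h).elim (fun h => ⟨1, by simpa⟩) fun h => ⟨-1, by simpa⟩
  have hfix : (fun k => (Pi.mulSingle i u * Pi.mulSingle j u : Fin n → ℤˣ) k •
      (μ ∘ Equiv.swap i j) k) = μ := by
    funext k
    rcases eq_or_ne k i with rfl | hki
    · simp [hu, hij]
    · rcases eq_or_ne k j with rfl | hkj
      · simp [hu, hki, smul_smul]
      · simp [hki, hkj, Equiv.swap_apply_of_ne_of_ne]
  have hneg := hF.2 (Pi.mulSingle i u * Pi.mulSingle j u) (μ ∘ Equiv.swap i j)
    (by simp [Finset.prod_mul_distrib, Finset.prod_pi_mulSingle'])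
  rw [hfix, hF.1, Equiv.Perm.sign_swap hij, Units.neg_smul, one_smul] at hneg
  exact self_eq_neg.mp hneg

theorem eq_zero_of_forall_chamber [IsAddTorsionFree M] {F : (Fin (n + 1) → ℤ) → M}
    (hF : F ∈ alternating (n + 1) M) (h : ∀ μ, Chamber μ → F μ = 0) : F = 0 := by
  funext μ
  by_cases hμ : Function.Injective fun i => |μ i|
  · obtain ⟨σ, ε, hε, hch⟩ := exists_chamber hμ
    have hsign : Equiv.Perm.sign σ • F μ = 0 := by
      rw [← hF.1, ← hF.2 ε _ hε]
      exact h _ hch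
    exact (smul_eq_zero_iff_eq _).mp hsign
  · obtain ⟨i, j, hij, hne⟩ : ∃ i j, |μ i| = |μ j| ∧ i ≠ j := by
      simpa [Function.Injective] using hμ
    exact apply_eq_zero_of_abs_eq hF hne hij

end Alternating

section Alternant

variable {n : ℕ} {M N : Type*} [AddCommGroup M] [AddCommGroup N]

/-- The weight with doubled coordinates `b`. -/
def half (b : Fin n → ℤ) : Fin n → ℚ :=
  fun i => b i / 2

/-- The action of `wAct` on doubled weights. -/
def signedPerm (σ : Equiv.Perm (Fin n)) (ε : Fin n → Bool) (b : Fin n → ℤ) : Fin n → ℤ :=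
  fun i => (if ε i then -1 else 1) * b (σ⁻¹ i)

/-- The alternating sum of the values of `H` at `μ - w b`, for `w` in the Weyl group of type `D`:
the coefficient at `μ` of the product of the alternant of `b` with the series `∑ v, H v • x ^ v`. -/
def alternatingSum (H : (Fin n → ℤ) → M) (b μ : Fin n → ℤ) : M :=
  ∑ σ : Equiv.Perm (Fin n), ∑ ε : Fin n → Bool,
    if (∏ i, (if ε i then (-1 : ℤ) else 1)) = 1 then
      wDet σ ε • H (μ - signedPerm σ ε b) else 0

theorem xpow_half (b : Fin n → ℤ) : xpow (half b) = AddMonoidAlgebra.single b 1 := by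
  simp [xpow, half, mul_div_cancel₀]

theorem wAct_half (σ : Equiv.Perm (Fin n)) (ε : Fin n → Bool) (b : Fin n → ℤ) :
    wAct σ ε (half b) = half (signedPerm σ ε b) := by
  funext i
  simp only [wAct, half, signedPerm]
  push_cast
  rw [mul_div_assoc]

theorem coeff_altD_mul (b : Fin n → ℤ) (f : AddMonoidAlgebra ℤ (Fin n → ℤ)) (μ : Fin n → ℤ) :
    (altD (half b) * f).coeff μ = alternatingSum f.coeff b μ := by
  simp only [altD, alternatingSum, Finset.sum_mul, AddMonoidAlgebra.coeff_sum,
    Finsupp.finsetSum_apply]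
  refine Finset.sum_congr rfl fun σ _ => Finset.sum_congr rfl fun ε _ => ?_
  split_ifs
  · rw [wAct_half, xpow_half, smul_mul_assoc, AddMonoidAlgebra.coeff_smul, Finsupp.smul_apply,
      AddMonoidAlgebra.coeff_single_mul_apply, one_mul, neg_add_eq_sub]
  · simp

theorem map_alternatingSum (φ : M →+ N) (H : (Fin n → ℤ) → M) (b μ : Fin n → ℤ) :
    φ (alternatingSum H b μ) = alternatingSum (fun v => φ (H v)) b μ := by
  simp only [alternatingSum, map_sum, apply_ite φ, map_zsmul, map_zero]

theorem foldDet_eq_sum {R : Type*} [CommRing R] (h : ℤ → R) (s : ℤˣ) (μ b : Fin n → ℤ) :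
    foldDet h s μ b = ∑ σ : Equiv.Perm (Fin n), ∑ ε : Fin n → Bool,
      (Equiv.Perm.sign σ * ∏ i, if ε i then s else 1) • ∏ i, h ((μ - signedPerm σ ε b) i) := by
  rw [foldDet, Matrix.det_apply]
  refine Finset.sum_congr rfl fun σ _ => ?_
  have hprod : ∏ i, kernel h s (μ (σ i)) (b i) =
      ∑ ε : Fin n → Bool, ∏ i, (if ε i then s else 1) • h ((μ - signedPerm σ ε b) i) := by
    refine Eq.trans ?_ (Fintype.prod_sum fun i (e : Bool) =>
      (if e then s else 1) • h (μ i - (if e then -1 else 1) * b (σ⁻¹ i)))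
    rw [← Equiv.prod_comp σ⁻¹]
    simp [kernel, add_comm]
  simp only [Matrix.of_apply, hprod, Finset.smul_sum, Finset.prod_smul, smul_smul]

theorem two_mul_alternatingSum_prod {R : Type*} [CommRing R] (h : ℤ → R) (b μ : Fin n → ℤ) :
    2 * alternatingSum (fun v => ∏ i, h (v i)) b μ = foldDet h 1 μ b + foldDet h (-1) μ b := by
  simp only [alternatingSum, foldDet_eq_sum, ← Finset.sum_add_distrib, Finset.mul_sum]
  refine Finset.sum_congr rfl fun σ _ => Finset.sum_congr rfl fun ε _ => ?_
  have hunit : ∏ i, (if ε i then (-1 : ℤ) else 1) = ((∏ i, if ε i then -1 else 1 : ℤˣ) : ℤ) := by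
    simp [Units.coe_prod, apply_ite]
  rw [wDet, hunit]
  rcases Int.units_eq_one_or (∏ i, if ε i then -1 else 1) with hε | hε <;>
    simp [hε, two_mul, Units.smul_def]

end Alternant

section GeneratingFunction

open PowerSeries

variable {n : ℕ}

open Classical in
/-- The generating function, by their sum, of the pairs satisfying `P`. -/
noncomputable def pairSeries (P : ℕ → ℕ → Prop) : ℤ⟦X⟧ :=
  mk fun m =>
    (((Finset.HasAntidiagonal.antidiagonal m).filter fun p => P p.1 p.2).card : ℤ)

open Classical in
/-- The series `∑ X ^ (2 * c)` over the `c` satisfying `Q`: pairs with a prescribed difference are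
parametrized by their minimum `c`. -/
noncomputable def evenSeries (Q : ℕ → Prop) : ℤ⟦X⟧ :=
  mk fun m => if Even m ∧ Q (m / 2) then 1 else 0

/-- The number of families of pairs `(k i, k' i)` with total sum `r`, prescribed doubled differences
`v i`, and minima constrained by `Q i`. -/
noncomputable def tupleCount (Q : Fin n → ℕ → Prop) (v : Fin n → ℤ) (r : ℕ) : ℕ :=
  Nat.card {t : (Fin n → ℕ) × (Fin n → ℕ) //
    (∀ i, 2 * ((t.2 i : ℤ) - t.1 i) = v i ∧ Q i (min (t.1 i) (t.2 i))) ∧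
      ∑ i, (t.1 i + t.2 i) = r}

theorem even_of_tupleCount_ne_zero {Q : Fin n → ℕ → Prop} {v : Fin n → ℤ} {r : ℕ}
    (h : tupleCount Q v r ≠ 0) (i : Fin n) : Even (v i) :=
  have ⟨_, ht⟩ := (Nat.card_ne_zero.mp h).1
  (ht.1 i).1 ▸ even_two_mul _

theorem mk_card_eq_prod_pairSeries (P : Fin n → ℕ → ℕ → Prop) :
    mk (fun r => (Nat.card {t : (Fin n → ℕ) × (Fin n → ℕ) //
      (∀ i, P i (t.1 i) (t.2 i)) ∧ ∑ i, (t.1 i + t.2 i) = r} : ℤ)) =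
        ∏ i, pairSeries (P i) := by
  classical
  ext r
  let pairs (l : Fin n →₀ ℕ) : Finset (Fin n → ℕ × ℕ) :=
    Fintype.piFinset fun i =>
      (Finset.HasAntidiagonal.antidiagonal (l i)).filter fun p => P i p.1 p.2
  have hpairs (l : Fin n →₀ ℕ) (x) :
      x ∈ pairs l ↔ (∀ i, P i (x i).1 (x i).2) ∧ ∀ i, (x i).1 + (x i).2 = l i := by
    simp [pairs, forall_and, and_comm]
  have hdisj : Set.PairwiseDisjoint
      (Finset.finsuppAntidiag Finset.univ r : Finset (Fin n →₀ ℕ)) pairs :=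
    fun l _ l' _ hll => Finset.disjoint_left.mpr fun x hx hx' => hll <| Finsupp.ext fun i => by
      rw [← ((hpairs l x).mp hx).2, ← ((hpairs l' x).mp hx').2]
  rw [coeff_prod]
  simp only [pairSeries, coeff_mk]
  rw [Finset.sum_congr rfl fun l _ => (by simp [pairs, Fintype.card_piFinset] :
      _ = ((pairs l).card : ℤ)), ← Nat.cast_sum, ← Finset.card_biUnion hdisj, Nat.cast_inj,
    ← Nat.card_eq_finsetCard]
  refine Nat.card_congr ((Equiv.arrowProdEquivProdArrow _ _ _).symm.subtypeEquiv fun t => ?_)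
  simp only [Finset.mem_biUnion, hpairs, Finset.mem_finsuppAntidiag]
  constructor
  · rintro ⟨hP, hr⟩
    exact ⟨Finsupp.equivFunOnFinite.symm fun i => t.1 i + t.2 i, by simpa, hP, fun i => rfl⟩
  · rintro ⟨l, ⟨hl, _⟩, hP, hsum⟩
    exact ⟨hP, (Finset.sum_congr rfl fun i _ => hsum i).trans hl⟩

theorem card_pairs_eq_ite (w : ℤ) (Q : ℕ → Prop) [DecidablePred Q] (m : ℕ)
    [DecidablePred fun p : ℕ × ℕ => 2 * ((p.2 : ℤ) - p.1) = w + w ∧ Q (min p.1 p.2)] :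
    ((Finset.HasAntidiagonal.antidiagonal m).filter
      fun p => 2 * ((p.2 : ℤ) - p.1) = w + w ∧ Q (min p.1 p.2)).card =
        if w.natAbs ≤ m ∧ Even (m - w.natAbs) ∧ Q ((m - w.natAbs) / 2) then 1 else 0 := by
  have hmin {x y : ℕ} (hsum : x + y = m) (hdiff : 2 * ((y : ℤ) - x) = w + w) :
      w.natAbs ≤ m ∧ Even (m - w.natAbs) ∧ min x y = (m - w.natAbs) / 2 := by grind
  split_ifs with h
  · refine Finset.card_eq_one.mpr
      ⟨((m - w.natAbs) / 2 + (-w).toNat, (m - w.natAbs) / 2 + w.toNat), ?_⟩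
    ext ⟨x, y⟩
    have hsolve : x + y = m ∧ 2 * ((y : ℤ) - x) = w + w ↔
        x = (m - w.natAbs) / 2 + (-w).toNat ∧ y = (m - w.natAbs) / 2 + w.toNat := by grind
    simp only [Finset.mem_filter, Finset.HasAntidiagonal.mem_antidiagonal, Finset.mem_singleton,
      Prod.mk.injEq, ← hsolve]
    exact ⟨fun hxy => ⟨hxy.1, hxy.2.1⟩,
      fun hxy => ⟨hxy.1, hxy.2, (hmin hxy.1 hxy.2).2.2 ▸ h.2.2⟩⟩
  · rw [Finset.card_eq_zero, Finset.filter_eq_empty_iff]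
    rintro ⟨x, y⟩ hxy ⟨hdiff, hQ⟩
    obtain ⟨hle, heven, hc⟩ := hmin (Finset.HasAntidiagonal.mem_antidiagonal.mp hxy) hdiff
    exact h ⟨hle, heven, hc ▸ hQ⟩

theorem pairSeries_eq_halfPow_mul_evenSeries (v : ℤ) (Q : ℕ → Prop) :
    pairSeries (fun k k' => 2 * ((k' : ℤ) - k) = v ∧ Q (min k k')) =
      halfPow X v * evenSeries Q := by
  classical
  by_cases hv : Even v
  · obtain ⟨w, rfl⟩ := hv
    ext m
    rw [halfPow, if_pos (Even.add_self w), coeff_X_pow_mul', pairSeries, evenSeries, coeff_mk,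
      coeff_mk, card_pairs_eq_ite w Q, show (w + w).natAbs / 2 = w.natAbs by omega, ← ite_and]
    exact Nat.cast_ite ..
  · rw [halfPow_of_odd _ hv, zero_mul]
    ext m
    simp only [pairSeries, coeff_mk, map_zero, Nat.cast_eq_zero, Finset.card_eq_zero,
      Finset.filter_eq_empty_iff]
    exact fun p _ hp => hv (hp.1 ▸ even_two_mul _)

theorem mk_tupleCount (Q : Fin n → ℕ → Prop) (v : Fin n → ℤ) :
    mk (fun r => (tupleCount Q v r : ℤ)) = (∏ i, halfPow X (v i)) * ∏ i, evenSeries (Q i) := by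
  simp only [← Finset.prod_mul_distrib, ← pairSeries_eq_halfPow_mul_evenSeries]
  exact mk_card_eq_prod_pairSeries fun i k k' => 2 * ((k' : ℤ) - k) = v i ∧ Q i (min k k')

theorem evenSeries_eq_zero : evenSeries (· = 0) = 1 := by
  ext m
  rw [evenSeries, coeff_mk, coeff_one]
  split_ifs <;> grind

theorem one_sub_mul_evenSeries_true : (1 - X ^ 2) * evenSeries (fun _ => True) = 1 := by
  ext m
  rw [sub_mul, one_mul, map_sub, coeff_X_pow_mul', evenSeries, coeff_mk, coeff_mk, coeff_one]
  split_ifs <;> grind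

theorem one_sub_mul_evenSeries_lt {l : ℤ} (hl : Even l) :
    (1 - X ^ 2) * evenSeries (fun c => 2 * (c : ℤ) < l) = 1 - X ^ l.toNat := by
  ext m
  rw [sub_mul, one_mul, map_sub, map_sub, coeff_X_pow_mul', evenSeries, coeff_mk, coeff_mk,
    coeff_one, coeff_X_pow]
  split_ifs <;> grind

end GeneratingFunction

section Character

open PowerSeries

variable {n : ℕ}

/-- The character of `V(r Λ_{n-1})`: the multiplier on the left-hand side of the Pieri rule. -/
noncomputable def rowChar (n r : ℕ) : AddMonoidAlgebra ℤ (Fin (n + 1) → ℤ) :=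
  ∑ t : (Fin (n + 1) → Fin (r + 1)) × (Fin (n + 1) → Fin (r + 1)),
    if min (t.1 0 : ℕ) (t.2 0 : ℕ) = 0 ∧ ∑ i, ((t.1 i : ℕ) + (t.2 i : ℕ)) = r then
      xpow (fun i => ((t.2 i : ℕ) : ℚ) - ((t.1 i : ℕ) : ℚ))
    else 0

/-- The constraint on the minima `min (k i) (k' i)` in `rowChar`. -/
def rowBound (n : ℕ) : Fin (n + 1) → ℕ → Prop :=
  Fin.cons (· = 0) fun _ _ => True

/-- The constraint on the minima `min (k i) (k' i)` in the Pieri rule, between doubled weights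
shifted by `ρ`. -/
def pieriBound (a b : Fin (n + 1) → ℤ) : Fin (n + 1) → ℕ → Prop :=
  Fin.cons (· = 0) fun i c => 2 * (c : ℤ) < gap a b i

theorem xpow_natCast_sub (x y : Fin n → ℕ) :
    xpow (fun i => (y i : ℚ) - (x i : ℚ)) =
      AddMonoidAlgebra.single (fun i => 2 * ((y i : ℤ) - x i)) 1 := by
  rw [← xpow_half]
  congr 1
  funext i
  simp [half]

theorem tupleCount_eq_card_filter (Q : Fin n → ℕ → Prop) (v : Fin n → ℤ) (r : ℕ)
    [DecidablePred fun t : (Fin n → Fin (r + 1)) × (Fin n → Fin (r + 1)) =>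
      (∀ i, 2 * (((t.2 i : ℕ) : ℤ) - (t.1 i : ℕ)) = v i ∧ Q i (min (t.1 i : ℕ) (t.2 i))) ∧
        ∑ i, ((t.1 i : ℕ) + (t.2 i : ℕ)) = r] :
    tupleCount Q v r = (Finset.univ.filter
      fun t : (Fin n → Fin (r + 1)) × (Fin n → Fin (r + 1)) =>
        (∀ i, 2 * (((t.2 i : ℕ) : ℤ) - (t.1 i : ℕ)) = v i ∧ Q i (min (t.1 i : ℕ) (t.2 i))) ∧
          ∑ i, ((t.1 i : ℕ) + (t.2 i : ℕ)) = r).card := by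
  rw [tupleCount, ← Nat.card_eq_finsetCard]
  have hle {x y : Fin n → ℕ} (h : ∑ i, (x i + y i) = r) (i : Fin n) : x i + y i < r + 1 :=
    Nat.lt_succ_of_le (h ▸ Finset.single_le_sum (f := fun i => x i + y i)
      (fun _ _ => Nat.zero_le _) (Finset.mem_univ i))
  exact Nat.card_congr
    { toFun := fun t => ⟨(fun i => ⟨t.1.1 i, by have := hle t.2.2 i; omega⟩,
        fun i => ⟨t.1.2 i, by have := hle t.2.2 i; omega⟩),
        Finset.mem_filter.mpr ⟨Finset.mem_univ _, t.2⟩⟩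
      invFun := fun t => ⟨(fun i => t.1.1 i, fun i => t.1.2 i), (Finset.mem_filter.mp t.2).2⟩
      left_inv := fun _ => rfl
      right_inv := fun _ => rfl }

theorem coeff_rowChar (n r : ℕ) (v : Fin (n + 1) → ℤ) :
    (rowChar n r).coeff v = tupleCount (rowBound n) v r := by
  classical
  rw [tupleCount_eq_card_filter, rowChar, AddMonoidAlgebra.coeff_sum, Finsupp.finsetSum_apply,
    ← Finset.sum_boole]
  refine Finset.sum_congr rfl fun t _ => ?_
  have hiff : (∀ i, 2 * (((t.2 i : ℕ) : ℤ) - (t.1 i : ℕ)) = v i ∧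
      rowBound n i (min (t.1 i : ℕ) (t.2 i))) ↔
        (fun i => 2 * (((t.2 i : ℕ) : ℤ) - (t.1 i : ℕ))) = v ∧ min (t.1 0 : ℕ) (t.2 0) = 0 := by
    rw [forall_and, ← funext_iff]
    simp [Fin.forall_fin_succ, rowBound]
  rw [xpow_natCast_sub (fun i => (t.1 i : ℕ)) fun i => (t.2 i : ℕ)]
  simp only [hiff]
  split_ifs with hrow hv hv
  · simp [hv.1.1]
  · simp only [AddMonoidAlgebra.coeff_single]
    exact Finsupp.single_eq_of_ne' fun h => hv ⟨⟨h, hrow.1⟩, hrow.2⟩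
  · exact absurd ⟨hv.1.2, hv.2⟩ hrow
  · simp

theorem one_sub_X_sq_pow_mul_mk_rowChar (v : Fin (n + 1) → ℤ) :
    (1 - X ^ 2) ^ n * mk (fun r => (rowChar n r).coeff v) = ∏ i, halfPow X (v i) := by
  have hprod : (1 - X ^ 2) ^ n * ∏ i, evenSeries (rowBound n i) = 1 := by
    rw [Fin.prod_univ_succ, rowBound, Fin.cons_zero, evenSeries_eq_zero, one_mul]
    simp only [Fin.cons_succ, Finset.prod_const, Finset.card_univ, Fintype.card_fin]
    rw [← mul_pow, one_sub_mul_evenSeries_true, one_pow]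
  simp only [coeff_rowChar]
  rw [mk_tupleCount, mul_left_comm, hprod, mul_one]

theorem two_mul_one_sub_X_sq_pow_mul_mk (b μ : Fin (n + 1) → ℤ) :
    2 * (1 - X ^ 2) ^ n * mk (fun r => (altD (half b) * rowChar n r).coeff μ) =
      foldDet (halfPow X) 1 μ b + foldDet (halfPow X) (-1) μ b := by
  have hmk : mk (fun r => (altD (half b) * rowChar n r).coeff μ) =
      alternatingSum (fun v => mk fun r => (rowChar n r).coeff v) b μ := by
    ext r
    rw [coeff_mk, coeff_altD_mul]
    have hcoeff := map_alternatingSum (coeff r).toAddMonoidHom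
      (fun v => mk fun r => (rowChar n r).coeff v) b μ
    simp only [LinearMap.toAddMonoidHom_coe, coeff_mk] at hcoeff
    exact hcoeff.symm
  rw [hmk, ← two_mul_alternatingSum_prod, mul_assoc]
  congr 1
  have hmul := map_alternatingSum (AddMonoidHom.mulLeft ((1 - X ^ 2) ^ n))
    (fun v => mk fun r => (rowChar n r).coeff v) b μ
  simpa only [AddMonoidHom.coe_mulLeft, one_sub_X_sq_pow_mul_mk_rowChar] using hmul

theorem two_mul_one_sub_X_sq_pow_ne_zero (n : ℕ) : (2 * (1 - X ^ 2) ^ n : ℤ⟦X⟧) ≠ 0 := by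
  intro h
  simpa [map_ofNat] using congrArg constantCoeff h

theorem coeff_altD_mul_rowChar_mem_alternating (b : Fin (n + 1) → ℤ) (r : ℕ) :
    (fun μ => (altD (half b) * rowChar n r).coeff μ) ∈ alternating (n + 1) ℤ := by
  have hmk : (fun μ => mk fun r => (altD (half b) * rowChar n r).coeff μ) ∈
      alternating (n + 1) ℤ⟦X⟧ := by
    refine mem_alternating_of_mul_mem (two_mul_one_sub_X_sq_pow_ne_zero n) ?_
    simp only [two_mul_one_sub_X_sq_pow_mul_mk]
    exact add_mem (foldDet_mem_alternating (halfPow_even _) 1 b)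
      (foldDet_mem_alternating (halfPow_even _) (-1) b)
  simpa using map_mem_alternating (coeff r).toAddMonoidHom hmk

theorem even_gap {a b : Fin (n + 1) → ℤ} (h : ∀ i j, Even (a i - b j)) (i : Fin n) :
    Even (gap a b i) := by
  have := h i.succ i.succ
  have := h i.succ i.castSucc
  have := h i.castSucc i.succ
  grind [gap]

theorem one_sub_X_sq_pow_mul_mk_tupleCount {a b : Fin (n + 1) → ℤ}
    (hpar : ∀ i j, Even (b i - b j)) :
    (1 - X ^ 2) ^ n * mk (fun r => (tupleCount (pieriBound a b) (a - b) r : ℤ)) =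
      (∏ i, halfPow X (a i - b i)) * ∏ i : Fin n, (1 - X ^ (gap a b i).toNat) := by
  rw [mk_tupleCount, mul_left_comm]
  simp only [Pi.sub_apply]
  by_cases hab : ∀ i, Even (a i - b i)
  · have hgap (i : Fin n) : Even (gap a b i) :=
      even_gap (fun i j => by simpa using (hab i).add (hpar i j)) i
    rw [Fin.prod_univ_succ fun i => evenSeries (pieriBound a b i), pieriBound, Fin.cons_zero,
      evenSeries_eq_zero, one_mul, ← Fin.prod_const, ← Finset.prod_mul_distrib]
    simp only [Fin.cons_succ, one_sub_mul_evenSeries_lt (hgap _)]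
  · obtain ⟨i, hi⟩ := not_forall.mp hab
    rw [Finset.prod_eq_zero (Finset.mem_univ i) (halfPow_of_odd X hi), zero_mul, zero_mul]

theorem coeff_altD_mul_rowChar {μ b : Fin (n + 1) → ℤ} (hμ : Chamber μ) (hb : Chamber b)
    (hpar : ∀ i j, Even (b i - b j)) (r : ℕ) :
    (altD (half b) * rowChar n r).coeff μ = tupleCount (pieriBound μ b) (μ - b) r := by
  have hmk : mk (fun r => (altD (half b) * rowChar n r).coeff μ) =
      mk fun r => (tupleCount (pieriBound μ b) (μ - b) r : ℤ) := by
    refine mul_left_cancel₀ (two_mul_one_sub_X_sq_pow_ne_zero n) ?_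
    rw [two_mul_one_sub_X_sq_pow_mul_mk, foldDet_one_add_foldDet_neg_one X hμ hb hpar, mul_assoc,
      one_sub_X_sq_pow_mul_mk_tupleCount hpar]
  simpa only [coeff_mk] using congrArg (coeff r) hmk

end Character

section Expansion

variable {n : ℕ}

theorem tupleCount_zero (Q : Fin n → ℕ → Prop) (v : Fin n → ℤ)
    [Decidable (v = 0 ∧ ∀ i, Q i 0)] :
    tupleCount Q v 0 = if v = 0 ∧ ∀ i, Q i 0 then 1 else 0 := by
  have hzero {x y : Fin n → ℕ} (h : ∑ i, (x i + y i) = 0) : x = 0 ∧ y = 0 := by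
    simpa [funext_iff, forall_and] using h
  split_ifs with h
  · obtain ⟨rfl, hQ⟩ := h
    refine Nat.card_eq_one_iff_unique.mpr ⟨⟨fun t t' => Subtype.ext (Prod.ext ?_ ?_)⟩,
      ⟨⟨0, by simpa⟩⟩⟩
    · rw [(hzero t.2.2).1, (hzero t'.2.2).1]
    · rw [(hzero t.2.2).2, (hzero t'.2.2).2]
  · refine Nat.card_eq_zero.mpr (Or.inl ⟨fun ⟨⟨x, y⟩, hxy, hsum⟩ => h ?_⟩)
    obtain ⟨rfl, rfl⟩ := hzero hsum
    simp only [Pi.zero_apply, Nat.cast_zero, sub_zero, mul_zero, min_self, forall_and] at hxy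
    exact ⟨funext fun i => (hxy.1 i).symm, hxy.2⟩

theorem rowChar_zero (n : ℕ) : rowChar n 0 = 1 := by
  simp [rowChar, xpow, AddMonoidAlgebra.one_def, Pi.zero_def]

theorem altD_mem_alternating (b : Fin (n + 1) → ℤ) :
    ⇑(altD (half b)).coeff ∈ alternating (n + 1) ℤ := by
  simpa only [rowChar_zero, mul_one] using coeff_altD_mul_rowChar_mem_alternating b 0

theorem coeff_altD {μ b : Fin (n + 1) → ℤ} (hμ : Chamber μ) (hb : Chamber b)
    (hpar : ∀ i j, Even (b i - b j)) :
    (altD (half b)).coeff μ = if μ = b then 1 else 0 := by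
  classical
  have hcoeff := coeff_altD_mul_rowChar hμ hb hpar 0
  rw [rowChar_zero, mul_one, tupleCount_zero, Nat.cast_ite, Nat.cast_one, Nat.cast_zero] at hcoeff
  rw [hcoeff]
  refine if_congr ((and_iff_left_of_imp fun h => ?_).trans sub_eq_zero) rfl rfl
  obtain rfl := sub_eq_zero.mp h
  exact Fin.cases rfl fun i => by simpa [pieriBound, gap] using hμ.abs_castSucc_lt i

theorem eq_of_coeff_eq_of_chamber {f g : AddMonoidAlgebra ℤ (Fin (n + 1) → ℤ)}
    (hf : ⇑f.coeff ∈ alternating (n + 1) ℤ) (hg : ⇑g.coeff ∈ alternating (n + 1) ℤ)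
    (h : ∀ μ, Chamber μ → f.coeff μ = g.coeff μ) : f = g := by
  refine AddMonoidAlgebra.coeff_injective (DFunLike.coe_injective (sub_eq_zero.mp ?_))
  exact eq_zero_of_forall_chamber (sub_mem hf hg) fun μ hμ => sub_eq_zero.mpr (h μ hμ)

theorem sum_smul_altD_mem_alternating (T : Finset (Fin (n + 1) → ℤ))
    (x : (Fin (n + 1) → ℤ) → ℤ) :
    ⇑(∑ c ∈ T, x c • altD (half c)).coeff ∈ alternating (n + 1) ℤ := by
  simp only [AddMonoidAlgebra.coeff_sum, AddMonoidAlgebra.coeff_smul, Finsupp.coe_finsetSum,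
    Finsupp.coe_smul]
  exact sum_mem fun c _ => zsmul_mem (altD_mem_alternating c) _

theorem coeff_sum_smul_altD {T : Finset (Fin (n + 1) → ℤ)}
    (hT : ∀ c ∈ T, Chamber c ∧ ∀ i j, Even (c i - c j)) (x : (Fin (n + 1) → ℤ) → ℤ)
    {μ : Fin (n + 1) → ℤ} (hμ : Chamber μ) :
    (∑ c ∈ T, x c • altD (half c)).coeff μ = if μ ∈ T then x μ else 0 := by
  rw [← Finset.sum_ite_eq T μ x, AddMonoidAlgebra.coeff_sum, Finsupp.finsetSum_apply]
  refine Finset.sum_congr rfl fun c hc => ?_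
  rw [AddMonoidAlgebra.coeff_smul, Finsupp.smul_apply, coeff_altD hμ (hT c hc).1 (hT c hc).2,
    smul_ite, smul_eq_mul, mul_one, smul_zero]

theorem eq_finsum_altD {f : AddMonoidAlgebra ℤ (Fin (n + 1) → ℤ)}
    (hf : ⇑f.coeff ∈ alternating (n + 1) ℤ) {S : Set (Fin (n + 1) → ℤ)}
    (hS : ∀ c ∈ S, Chamber c ∧ ∀ i j, Even (c i - c j))
    (hfS : ∀ μ, Chamber μ → f.coeff μ ≠ 0 → μ ∈ S) :
    f = ∑ᶠ c ∈ S, f.coeff c • altD (half c) := by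
  classical
  have hfin : ∑ᶠ c ∈ S, f.coeff c • altD (half c) =
      ∑ c ∈ f.coeff.support.filter (· ∈ S), f.coeff c • altD (half c) := by
    refine finsum_mem_eq_sum_of_inter_support_eq _ (Set.ext fun c => ?_)
    rw [Set.mem_inter_iff, Set.mem_inter_iff, Finset.mem_coe, Finset.mem_filter,
      Finsupp.mem_support_iff, Function.mem_support]
    exact ⟨fun h => ⟨⟨left_ne_zero_of_smul h.2, h.1⟩, h.2⟩, fun h => ⟨h.1.2, h.2⟩⟩
  rw [hfin]
  refine eq_of_coeff_eq_of_chamber hf (sum_smul_altD_mem_alternating _ _) fun μ hμ => ?_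
  rw [coeff_sum_smul_altD (fun c hc => hS c (Finset.mem_filter.mp hc).2) _ hμ]
  split_ifs with h
  · rfl
  · by_contra hne
    exact h (Finset.mem_filter.mpr ⟨Finsupp.mem_support_iff.mpr hne, hfS μ hμ hne⟩)

end Expansion

section Weight

variable {n : ℕ}

/-- The weight which becomes `half b` after the shift by `ρ`. -/
def weight (b : Fin n → ℤ) : Fin n → ℚ :=
  half b - rhoD n

theorem weight_add_rhoD (b : Fin n → ℤ) : weight b + rhoD n = half b :=
  sub_add_cancel _ _

theorem weight_apply (b : Fin n → ℤ) (i : Fin n) : weight b i = b i / 2 - (i : ℕ) :=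
  rfl

theorem weight_injective : Function.Injective (weight (n := n)) := by
  intro a b hab
  funext i
  have := congrFun hab i
  rw [weight_apply, weight_apply] at this
  exact_mod_cast (by linarith : (a i : ℚ) = b i)

theorem weight_sub_eq_intCast_iff (a b : Fin n → ℤ) (i : Fin n) :
    (∃ z : ℤ, weight a i - weight b i = z) ↔ Even (a i - b i) := by
  refine exists_congr fun z => ?_
  rw [weight_apply, weight_apply, ← @Int.cast_inj ℚ]
  push_cast
  constructor <;> intro h <;> linarith

theorem integral_iff_exists_weight {lam : Fin (n + 1) → ℚ} :
    ((∀ i, ∃ z : ℤ, lam i = z) ∨ ∀ i, ∃ z : ℤ, lam i = z + 1 / 2) ↔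
      ∃ b, (∀ i j, Even (b i - b j)) ∧ weight b = lam := by
  constructor
  · rintro (h | h) <;> choose z hz using h
    · exact ⟨fun i => 2 * (z i + (i : ℕ)), by grind, funext fun i => by simp [weight_apply, hz]⟩
    · refine ⟨fun i => 2 * (z i + (i : ℕ)) + 1, by grind, funext fun i => ?_⟩
      rw [weight_apply, hz]
      push_cast
      ring
  · rintro ⟨b, hpar, rfl⟩
    rcases Int.even_or_odd' (b 0) with ⟨c, hc | hc⟩
    · refine Or.inl fun i => ?_
      obtain ⟨m, hm⟩ := hpar i 0
      refine ⟨c + m - (i : ℕ), ?_⟩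
      rw [weight_apply, show b i = 2 * (c + m) by omega]
      push_cast
      ring
    · refine Or.inr fun i => ?_
      obtain ⟨m, hm⟩ := hpar i 0
      refine ⟨c + m - (i : ℕ), ?_⟩
      rw [weight_apply, show b i = 2 * (c + m) + 1 by omega]
      push_cast
      ring

theorem dominantD_iff {lam : Fin (n + 1) → ℚ} :
    DominantD lam ↔ Monotone (fun i => |lam i|) ∧ (∀ i, i ≠ 0 → 0 ≤ lam i) ∧
      ∃ b, (∀ i j, Even (b i - b j)) ∧ weight b = lam := by
  rw [DominantD, integral_iff_exists_weight, ← and_assoc, ← and_assoc]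
  refine and_congr_left' ⟨fun ⟨hmono, hzero⟩ => ?_, fun ⟨hmono, hnonneg⟩ => ⟨?_, ?_⟩⟩
  · have hnonneg (i : Fin (n + 1)) (hi : i ≠ 0) : 0 ≤ lam i :=
      (abs_nonneg _).trans (hzero n.succ_pos i (Fin.pos_iff_ne_zero.mpr hi))
    refine ⟨fun i j hij => ?_, hnonneg⟩
    rcases eq_or_ne i 0 with rfl | hi
    · rcases eq_or_ne j 0 with rfl | hj
      · rfl
      · exact (hzero n.succ_pos j (Fin.pos_iff_ne_zero.mpr hj)).trans (le_abs_self _)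
    · have hi' := Fin.pos_iff_ne_zero.mpr hi
      have hj := Fin.pos_iff_ne_zero.mp (hi'.trans_le hij)
      simpa only [abs_of_nonneg, hnonneg i hi, hnonneg j hj] using hmono i j hij hi'
  · intro i j hij hi
    have hj := Fin.pos_iff_ne_zero.mp (lt_of_lt_of_le (b := i) hi hij)
    rw [← abs_of_nonneg (hnonneg j hj)]
    exact (le_abs_self _).trans (hmono hij)
  · intro h j hj
    rw [← abs_of_nonneg (hnonneg j (Fin.pos_iff_ne_zero.mp hj))]
    exact hmono (Fin.zero_le j)

theorem two_mul_abs_weight {b : Fin (n + 1) → ℤ} (hb : ∀ i, i ≠ 0 → 0 ≤ weight b i)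
    (i : Fin (n + 1)) : 2 * |weight b i| = ((|b i| - 2 * (i : ℕ) : ℤ) : ℚ) := by
  rcases eq_or_ne i 0 with rfl | hi
  · simp [weight_apply, abs_div, mul_div_cancel₀]
  · have hbi := hb i hi
    rw [abs_of_nonneg hbi]
    rw [weight_apply] at hbi ⊢
    have : 0 ≤ (b i : ℚ) := by linarith [i.val.cast_nonneg (α := ℚ)]
    push_cast
    rw [abs_of_nonneg this]
    ring

theorem strictMono_abs_iff {b : Fin (n + 1) → ℤ} (hb : ∀ i, i ≠ 0 → 0 ≤ weight b i)
    (hpar : ∀ i j, Even (b i - b j)) :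
    StrictMono (fun i => |b i|) ↔ Monotone fun i => |weight b i| := by
  rw [Fin.strictMono_iff_lt_succ, Fin.monotone_iff_le_succ]
  refine forall_congr' fun i => ?_
  have hev := hpar i.castSucc i.succ
  rw [← mul_le_mul_iff_right₀ (two_pos : (0 : ℚ) < 2), two_mul_abs_weight hb,
    two_mul_abs_weight hb, Int.cast_le, Fin.val_castSucc, Fin.val_succ]
  grind

theorem Chamber.weight_nonneg {b : Fin (n + 1) → ℤ} (hb : Chamber b)
    (hpar : ∀ i j, Even (b i - b j)) (i : Fin (n + 1)) (hi : i ≠ 0) : 0 ≤ weight b i := by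
  have hle : 2 * ((i : ℕ) : ℤ) ≤ |b i| := by
    clear hi
    induction i using Fin.induction with
    | zero => simp
    | succ i ih =>
      have hlt : |b i.castSucc| < |b i.succ| := hb.1 i.castSucc_lt_succ
      have hev := hpar i.castSucc i.succ
      rw [Fin.val_castSucc] at ih
      rw [Fin.val_succ]
      grind
  rw [abs_of_nonneg (hb.2 i hi)] at hle
  rw [weight_apply]
  have : 2 * ((i : ℕ) : ℚ) ≤ b i := by exact_mod_cast hle
  linarith

theorem dominantD_weight_iff {b : Fin (n + 1) → ℤ} :
    DominantD (weight b) ↔ Chamber b ∧ ∀ i j, Even (b i - b j) := by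
  have hex : (∃ a, (∀ i j, Even (a i - a j)) ∧ weight a = weight b) ↔ ∀ i j, Even (b i - b j) :=
    ⟨fun ⟨a, hpar, hab⟩ => weight_injective hab ▸ hpar, fun hpar => ⟨b, hpar, rfl⟩⟩
  rw [dominantD_iff, hex, ← and_assoc]
  refine and_congr_left fun hpar => ⟨fun ⟨hmono, hnonneg⟩ => ?_, fun hb => ?_⟩
  · refine ⟨(strictMono_abs_iff hnonneg hpar).mpr hmono, fun i hi => ?_⟩
    have hbi := hnonneg i hi
    rw [weight_apply] at hbi
    exact_mod_cast (by linarith [i.val.cast_nonneg (α := ℚ)] : (0 : ℚ) ≤ b i)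
  · have hnonneg := hb.weight_nonneg hpar
    exact ⟨(strictMono_abs_iff hnonneg hpar).mp hb.1, hnonneg⟩

theorem bijOn_weight {g : Fin (n + 1) → ℤ} (hpar : ∀ i j, Even (g i - g j)) :
    Set.BijOn weight {c | Chamber c ∧ ∀ i, Even (c i - g i)}
      {lam | DominantD lam ∧ ∀ i, ∃ z : ℤ, lam i - weight g i = z} := by
  have hiff (c : Fin (n + 1) → ℤ) :
      (Chamber c ∧ ∀ i, Even (c i - g i)) ↔
        DominantD (weight c) ∧ ∀ i, ∃ z : ℤ, weight c i - weight g i = z := by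
    simp only [dominantD_weight_iff, weight_sub_eq_intCast_iff, and_assoc]
    refine and_congr_right fun _ => (and_iff_right_of_imp fun h i j => ?_).symm
    have := h i
    have := h j
    have := hpar i j
    grind
  refine ⟨fun c hc => (hiff c).mp hc, weight_injective.injOn, fun lam hlam => ?_⟩
  obtain ⟨c, -, rfl⟩ := (dominantD_iff.mp hlam.1).2.2
  exact ⟨c, (hiff c).mpr hlam, rfl⟩

end Weight

section Pieri

variable {n : ℕ}

theorem dPieri_boundary_iff {x y M : ℚ} {k k' : ℕ} (hmin : min k k' = 0)
    (hdiff : (k' : ℚ) - k = x - y) :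
    (((k = 0 → x ≤ M) ∧ (0 < k → -x ≤ M)) ∧
      (k = 0 → 0 ≤ y → x - k' ≤ M) ∧ (k' = 0 → 0 ≤ y → x + k ≤ M) ∧
      (k' = 0 → y < 0 → -x - k ≤ M) ∧ (k = 0 → y < 0 → -x + k' ≤ M)) ↔
    max |x| |y| ≤ M := by
  have hk : (0 : ℚ) ≤ k := k.cast_nonneg
  have hk' : (0 : ℚ) ≤ k' := k'.cast_nonneg
  rw [max_le_iff, abs_le', abs_le']
  rcases Nat.eq_zero_or_pos k with rfl | hpos
  · rw [Nat.cast_zero] at *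
    grind
  · obtain rfl : k' = 0 := by omega
    rw [Nat.cast_zero] at *
    grind

theorem dPieri_interior_iff {x y M : ℚ} {k k' : ℕ} (hx : 0 ≤ x) (hy : 0 ≤ y)
    (hdiff : (k' : ℚ) - k = x - y) :
    (x ≤ M ∧ x + k - k' ≤ M) ↔ max |x| |y| ≤ M := by
  rw [abs_of_nonneg hx, abs_of_nonneg hy, max_le_iff, show x + k - k' = y by linarith]

theorem dPieri_eq_card {γ lam : Fin (n + 1) → ℚ} (hγ : ∀ i, i ≠ 0 → 0 ≤ γ i)
    (hlam : ∀ i, i ≠ 0 → 0 ≤ lam i) (r : ℕ) :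
    dPieri γ lam r = Nat.card {t : (Fin (n + 1) → ℕ) × (Fin (n + 1) → ℕ) //
      min (t.1 0) (t.2 0) = 0 ∧ ∑ i, (t.1 i + t.2 i) = r ∧
      (∀ i, (t.2 i : ℚ) - t.1 i = lam i - γ i) ∧
      ∀ i : Fin n, max |lam i.castSucc| |γ i.castSucc| ≤ lam i.succ - t.2 i.succ} := by
  refine Nat.card_congr (Equiv.subtypeEquivRight fun t => ⟨?_, ?_⟩)
  · rintro ⟨hmin, hsum, hdiff, hbd, hint, hint', hbd'⟩
    refine ⟨hmin n.succ_pos, hsum, hdiff, fun ⟨i, hi⟩ => ?_⟩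
    cases i with
    | zero =>
      exact (dPieri_boundary_iff (M := lam ⟨1, by omega⟩ - (t.2 ⟨1, by omega⟩ : ℚ))
        (hmin n.succ_pos) (hdiff 0)).mp ⟨hbd (by omega), hbd' (by omega)⟩
    | succ i =>
      have hne : (⟨i + 1, by omega⟩ : Fin (n + 1)) ≠ 0 := by simp [Fin.ext_iff]
      exact (dPieri_interior_iff (hlam _ hne) (hγ _ hne) (hdiff _)).mp
        ⟨hint ⟨i + 1, _⟩ (by simp) (by simpa), hint' ⟨i + 1, _⟩ (by simp) (by simpa)⟩
  · rintro ⟨hmin, hsum, hdiff, hle⟩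
    have hbd (h : 1 < n + 1) := (dPieri_boundary_iff hmin (hdiff 0)).mpr (hle ⟨0, by omega⟩)
    have hint (i : Fin (n + 1)) (hi : 1 ≤ (i : ℕ)) (h : (i : ℕ) + 1 < n + 1) :=
      have hne : i ≠ 0 := Fin.pos_iff_ne_zero.mp hi
      (dPieri_interior_iff (M := lam ⟨i + 1, h⟩ - (t.2 ⟨i + 1, h⟩ : ℚ)) (hlam i hne) (hγ i hne)
        (hdiff i)).mpr (hle ⟨i, by omega⟩)
    exact ⟨fun _ => hmin, hsum, hdiff, fun h => (hbd h).1, fun i hi h => (hint i hi h).1,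
      fun i hi h => (hint i hi h).2, fun h => (hbd h).2⟩

theorem max_abs_weight_le_iff {a b : Fin (n + 1) → ℤ} (ha : ∀ i, i ≠ 0 → 0 ≤ weight a i)
    (hb : ∀ i, i ≠ 0 → 0 ≤ weight b i) (hab : ∀ i j, Even (a i - b j)) {k k' : ℕ} {i : Fin n}
    (hdiff : 2 * ((k' : ℤ) - k) = a i.succ - b i.succ) :
    max |weight a i.castSucc| |weight b i.castSucc| ≤ weight a i.succ - k' ↔
      2 * ((min k k' : ℕ) : ℤ) < gap a b i := by
  have hmax : 2 * max |weight a i.castSucc| |weight b i.castSucc| =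
      ((max |a i.castSucc| |b i.castSucc| - 2 * (i : ℕ) : ℤ) : ℚ) := by
    rw [mul_max_of_nonneg _ _ zero_le_two, two_mul_abs_weight ha, two_mul_abs_weight hb,
      ← Int.cast_max, max_sub_sub_right, Fin.val_castSucc]
  have hsucc : 2 * (weight a i.succ - k') = ((a i.succ - 2 * (i : ℕ) - 2 - 2 * k' : ℤ) : ℚ) := by
    rw [weight_apply, Fin.val_succ]
    push_cast
    ring
  rw [← mul_le_mul_iff_right₀ (two_pos : (0 : ℚ) < 2), hmax, hsucc, Int.cast_le, gap]
  have := hab i.succ i.castSucc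
  have := hab i.castSucc i.succ
  have := hab i.succ i.succ
  grind

theorem dPieri_weight {a b : Fin (n + 1) → ℤ} (ha : DominantD (weight a))
    (hb : DominantD (weight b)) (hab : ∀ i, Even (a i - b i)) (r : ℕ) :
    dPieri (weight b) (weight a) r = tupleCount (pieriBound a b) (a - b) r := by
  have heven (i j) : Even (a i - b j) := by
    simpa only [sub_add_sub_cancel] using (hab i).add ((dominantD_weight_iff.mp hb).2 i j)
  have ha' := (dominantD_iff.mp ha).2.1
  have hb' := (dominantD_iff.mp hb).2.1
  rw [dPieri_eq_card hb' ha', tupleCount]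
  refine Nat.card_congr (Equiv.subtypeEquivRight fun t => ?_)
  have hdiff (i) : (t.2 i : ℚ) - t.1 i = weight a i - weight b i ↔
      2 * ((t.2 i : ℤ) - t.1 i) = (a - b) i := by
    rw [weight_apply, weight_apply, Pi.sub_apply, ← @Int.cast_inj ℚ]
    push_cast
    constructor <;> intro h <;> linarith
  have hbound (h : ∀ i, 2 * ((t.2 i : ℤ) - t.1 i) = (a - b) i) :
      (∀ i, pieriBound a b i (min (t.1 i) (t.2 i))) ↔ min (t.1 0) (t.2 0) = 0 ∧
        ∀ i : Fin n, max |weight a i.castSucc| |weight b i.castSucc| ≤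
          weight a i.succ - t.2 i.succ := by
    rw [Fin.forall_fin_succ]
    exact and_congr_right fun _ => forall_congr' fun i =>
      (max_abs_weight_le_iff ha' hb' heven (h i.succ)).symm
  simp only [hdiff, forall_and]
  constructor
  · rintro ⟨hmin, hsum, hd, hle⟩
    exact ⟨⟨hd, (hbound hd).mpr ⟨hmin, hle⟩⟩, hsum⟩
  · rintro ⟨⟨hd, hQ⟩, hsum⟩
    exact ⟨((hbound hd).mp hQ).1, hsum, hd, ((hbound hd).mp hQ).2⟩

end Pieri

end WeylD

/-- Pieri rule of type `D_n` at the level of Weyl alternants: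
`a_{γ+ρ} · char V(rΛ_{n-1}) = ∑_λ d^λ_{γ,r} a_{λ+ρ}`. -/
theorem pieri_D (n : ℕ) (hn : 2 ≤ n) (γ : Fin n → ℚ) (hγ : DominantD γ) (r : ℕ) :
    altD (γ + rhoD n) *
      (∑ t : (Fin n → Fin (r + 1)) × (Fin n → Fin (r + 1)),
        if min (t.1 ⟨0, by omega⟩ : ℕ) (t.2 ⟨0, by omega⟩ : ℕ) = 0 ∧
            ∑ i, ((t.1 i : ℕ) + (t.2 i : ℕ)) = r then
          xpow (fun i => ((t.2 i : ℕ) : ℚ) - ((t.1 i : ℕ) : ℚ))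
        else 0) =
    ∑ᶠ lam ∈ {lam : Fin n → ℚ | DominantD lam ∧ ∀ i, ∃ z : ℤ, lam i - γ i = z},
      (dPieri γ lam r : ℤ) • altD (lam + rhoD n) := by
  obtain ⟨n, rfl⟩ : ∃ m, n = m + 1 := ⟨n - 1, by omega⟩
  obtain ⟨g, hpar, rfl⟩ := (WeylD.dominantD_iff.mp hγ).2.2
  have hbij := WeylD.bijOn_weight hpar
  have hcoeff {c} (hc : WeylD.Chamber c) :=
    WeylD.coeff_altD_mul_rowChar hc (WeylD.dominantD_weight_iff.mp hγ).1 hpar r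
  have hexp := WeylD.eq_finsum_altD (WeylD.coeff_altD_mul_rowChar_mem_alternating g r)
    (fun c hc => WeylD.dominantD_weight_iff.mp (hbij.mapsTo hc).1) fun c hc hne =>
      ⟨hc, WeylD.even_of_tupleCount_ne_zero (Nat.cast_ne_zero.mp (hcoeff hc ▸ hne))⟩
  change altD (WeylD.weight g + rhoD (n + 1)) * WeylD.rowChar n r = _
  rw [WeylD.weight_add_rhoD, hexp]
  refine finsum_mem_eq_of_bijOn WeylD.weight hbij fun c hc => ?_
  rw [WeylD.weight_add_rhoD, hcoeff hc.1, WeylD.dPieri_weight (hbij.mapsTo hc).1 hγ hc.2]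
end
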